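/- Let 1 ≤ p < ∞ and f ∈ L^p(ℝ^{m-1}×𝔹^m, ℋ_k). Then 𝒟_k P_H[f] = 0 in ℝ^m_+ × 𝔹^m, and there exists a constant c′_{m,k} > 0 depending only on m and k such that for every y > 0 the function g_y(x′,v) := P_H[f]((x′,y),v) satisfies ‖g_y‖_p ≤ c′_{m,k} ‖f‖_p. -/

import Mathlib

noncomputable section

open MeasureTheory Metric Filter Topology
open scoped RealInnerProductSpace

/-- `ℝ^m` as a Euclidean space. -/
abbrev Evec (m : ℕ) : Type := EuclideanSpace ℝ (Fin m)

/-- Partial derivative in the `i`-th coordinate direction. -/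
def pdv {m : ℕ} (i : Fin m) (f : Evec m → ℝ) (x : Evec m) : ℝ :=
  fderiv ℝ f x (EuclideanSpace.single i 1)

/-- Euclidean Laplacian on `ℝ^m`. -/
def lapl {m : ℕ} (f : Evec m → ℝ) (x : Evec m) : ℝ :=
  ∑ i : Fin m, pdv i (pdv i f) x

/-- `p` is a real-valued polynomial function on `ℝ^m`, homogeneous of degree `k` and
harmonic; i.e. `p ∈ ℋ_k`. -/
def IsHk (m k : ℕ) (p : Evec m → ℝ) : Prop :=
  (∃ P : MvPolynomial (Fin m) ℝ, ∀ x : Evec m, p x = MvPolynomial.eval (fun i => x i) P) ∧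
  (∀ (c : ℝ) (x : Evec m), p (c • x) = c ^ k * p x) ∧
  (∀ x : Evec m, lapl p x = 0)

/-- The surface measure `dS` on the unit sphere `𝕊^{m-1}`, as a measure on `ℝ^m`. -/
def sphereM (m : ℕ) : Measure (Evec m) :=
  Measure.map Subtype.val ((volume : Measure (Evec m)).toSphere)

/-- `ω_m`, the surface area of the unit sphere `𝕊^{m-1}`. -/
def omegaS (m : ℕ) : ℝ := (sphereM m Set.univ).toReal

/-- The constant `c_{m,k} = 2(m+2k-2)/((m-2)ω_m)`. -/
def cmk (m k : ℕ) : ℝ := 2 * ((m : ℝ) + 2 * k - 2) / (((m : ℝ) - 2) * omegaS m)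

/-- The reflection `R_a(u) = u - 2⟨a,u⟩a/|a|²` (in Clifford notation `a u a/|a|²`). -/
def reflv {m : ℕ} (a u : Evec m) : Evec m :=
  u - (2 * ⟪a, u⟫ / ‖a‖ ^ 2) • a

/-- `dim ℋ_k`. -/
def hdim (m k : ℕ) : ℕ :=
  Nat.choose (m + k - 1) (m - 1) - Nat.choose (m + k - 3) (m - 1)

/-- `Z` is the reproducing kernel `Z_k` of `ℋ_k` on the unit sphere: a symmetric,
rotation invariant kernel, bounded by `dim ℋ_k` on the unit ball, belonging to `ℋ_k`
in the first variable and reproducing elements of `ℋ_k` from their spherical values. -/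
def IsZk (m k : ℕ) (Z : Evec m → Evec m → ℝ) : Prop :=
  (∀ v : Evec m, IsHk m k (fun u => Z u v)) ∧
  (∀ p : Evec m → ℝ, IsHk m k p → ∀ v : Evec m, (∫ u, Z u v * p u ∂(sphereM m)) = p v) ∧
  (∀ u v : Evec m, Z u v = Z v u) ∧
  (∀ u v : Evec m, ‖u‖ ≤ 1 → ‖v‖ ≤ 1 → |Z u v| ≤ (hdim m k : ℝ)) ∧
  (∀ (A : Evec m ≃ₗᵢ[ℝ] Evec m) (u v : Evec m), Z (A u) (A v) = Z u v)

/-- The point `(x', y) ∈ ℝ^{d+1}` with first `d` coordinates `x'` and last coordinate `y`. -/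
def upP (d : ℕ) (x' : Evec d) (y : ℝ) : Evec (d + 1) :=
  (EuclideanSpace.equiv (Fin (d + 1)) ℝ).symm
    (Fin.snoc (⇑(EuclideanSpace.equiv (Fin d) ℝ) x') y)

/-- The first `d` coordinates of a point of `ℝ^{d+1}`. -/
def downP (d : ℕ) (x : Evec (d + 1)) : Evec d :=
  (EuclideanSpace.equiv (Fin d) ℝ).symm (fun i => x (Fin.castSucc i))

/-- The last coordinate of a point of `ℝ^{d+1}`. -/
def lastP (d : ℕ) (x : Evec (d + 1)) : ℝ := x (Fin.last d)

/-- The Poisson kernel `P_H` for bosonic Laplacians in the upper half-space `ℝ^{d+1}_+`,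
`P_H(x,t,u,v) = c_{m,k} (y/|x-t|^m) Z_k(R_{x-t}(u), v)` with `m = d+1`, `x = (x',y)`,
`t = (t',0)`. -/
def PH (d k : ℕ) (Z : Evec (d + 1) → Evec (d + 1) → ℝ) (x' : Evec d) (y : ℝ)
    (t' : Evec d) (u v : Evec (d + 1)) : ℝ :=
  cmk (d + 1) k * (y / ‖upP d x' y - upP d t' 0‖ ^ (d + 1)) *
    Z (reflv (upP d x' y - upP d t' 0) u) v

/-- The Poisson integral `P_H[f]` in the upper half-space. -/
def PHint (d k : ℕ) (Z : Evec (d + 1) → Evec (d + 1) → ℝ)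
    (f : Evec d → Evec (d + 1) → ℝ) (x' : Evec d) (y : ℝ) (v : Evec (d + 1)) : ℝ :=
  ∫ t' : Evec d, (∫ u, PH d k Z x' y t' u v * f t' u ∂(sphereM (d + 1)))

/-- The Poisson kernel `P_B` for bosonic Laplacians in the unit ball. -/
def PB (m k : ℕ) (Z : Evec m → Evec m → ℝ) (x ζ ω ν : Evec m) : ℝ :=
  (cmk m k / 2) * ((1 - ‖x‖ ^ 2) / ‖x - ζ‖ ^ m) * Z (reflv (x - ζ) ω) ν

/-- The Poisson integral `P_B[h]` in the unit ball. -/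
def PBint (m k : ℕ) (Z : Evec m → Evec m → ℝ) (h : Evec m → Evec m → ℝ)
    (x ν : Evec m) : ℝ :=
  ∫ ζ, (∫ ω, PB m k Z x ζ ω ν * h ζ ω ∂(sphereM m)) ∂(sphereM m)

/-- Partial derivative in the first (`x`) variable. -/
def pd1 {m : ℕ} (i : Fin m) (f : Evec m → Evec m → ℝ) : Evec m → Evec m → ℝ :=
  fun x u => fderiv ℝ (fun x₁ => f x₁ u) x (EuclideanSpace.single i 1)

/-- Partial derivative in the second (`u`) variable. -/
def pd2 {m : ℕ} (i : Fin m) (f : Evec m → Evec m → ℝ) : Evec m → Evec m → ℝ :=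
  fun x u => fderiv ℝ (fun u₁ => f x u₁) u (EuclideanSpace.single i 1)

/-- The bosonic Laplacian `𝒟_k`. -/
def Dk (m k : ℕ) (f : Evec m → Evec m → ℝ) : Evec m → Evec m → ℝ := fun x u =>
  (∑ i : Fin m, pd1 i (pd1 i f) x u)
    - (4 / ((m : ℝ) + 2 * k - 2)) *
        ∑ i : Fin m, ∑ j : Fin m, u i * pd1 i (pd2 j (pd1 j f)) x u
    + (4 * ‖u‖ ^ 2 / (((m : ℝ) + 2 * k - 2) * ((m : ℝ) + 2 * k - 4))) *
        ∑ i : Fin m, ∑ j : Fin m, pd2 i (pd1 i (pd2 j (pd1 j f))) x u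

/-- `f ∈ C²(Ω×𝔹^m, ℋ_k)`: twice continuously differentiable on `Ω × 𝔹^m` and, for each
fixed `x ∈ Ω`, coinciding in the second variable with an element of `ℋ_k`. -/
def C2Hk (m k : ℕ) (Ω : Set (Evec m)) (f : Evec m → Evec m → ℝ) : Prop :=
  ContDiffOn ℝ 2 (fun q : Evec m × Evec m => f q.1 q.2) (Ω ×ˢ ball (0 : Evec m) 1) ∧
  ∀ x ∈ Ω, ∃ q, IsHk m k q ∧ ∀ u ∈ closedBall (0 : Evec m) 1, f x u = q u

/-- The `L^p` norm `(∫_{ℝ^{m-1}} ∫_{𝕊^{m-1}} |f(x',u)|^p dS(u) dx')^{1/p}` (`m = d+1`),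
valued in `ℝ≥0∞`. -/
def lpH (d : ℕ) (p : ℝ) (f : Evec d → Evec (d + 1) → ℝ) : ENNReal :=
  (∫⁻ x' : Evec d, ∫⁻ u, ENNReal.ofReal (|f x' u| ^ p) ∂(sphereM (d + 1))) ^ (1 / p)

/-- `f ∈ L^p(ℝ^{m-1}×𝔹^m, ℋ_k)` (`m = d+1`). -/
def MemLpH (d k : ℕ) (p : ℝ) (f : Evec d → Evec (d + 1) → ℝ) : Prop :=
  Measurable (fun q : Evec d × Evec (d + 1) => f q.1 q.2) ∧
  (∀ x' : Evec d, ∃ q, IsHk (d + 1) k q ∧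
    ∀ u ∈ closedBall (0 : Evec (d + 1)) 1, f x' u = q u) ∧
  lpH d p f < ⊤

/-- The `L^p` norm `(∫_{𝕊^{m-1}} ∫_{𝕊^{m-1}} |h(ζ,ω)|^p dS(ω) dS(ζ))^{1/p}`,
valued in `ℝ≥0∞`. -/
def lpS (m : ℕ) (p : ℝ) (h : Evec m → Evec m → ℝ) : ENNReal :=
  (∫⁻ ζ, ∫⁻ ω, ENNReal.ofReal (|h ζ ω| ^ p) ∂(sphereM m) ∂(sphereM m)) ^ (1 / p)

/-- `h ∈ L^p(𝕊^{m-1}×𝔹^m, ℋ_k)`. -/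
def MemLpS (m k : ℕ) (p : ℝ) (h : Evec m → Evec m → ℝ) : Prop :=
  Measurable (fun q : Evec m × Evec m => h q.1 q.2) ∧
  (∀ ζ : Evec m, ‖ζ‖ = 1 → ∃ q, IsHk m k q ∧
    ∀ ω ∈ closedBall (0 : Evec m) 1, h ζ ω = q ω) ∧
  lpS m p h < ⊤

/-- Iterated partial derivative `D_x^α` in the first variable, for a multi-index `α ∈ ℕ^m`. -/
def Dx {m : ℕ} (α : Fin m → ℕ) (f : Evec m → Evec m → ℝ) : Evec m → Evec m → ℝ :=
  (List.finRange m).foldr (fun i g => (pd1 i)^[α i] g) f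

/-- Iterated partial derivative `D_ν^β` in the second variable, for a multi-index `β ∈ ℕ^m`. -/
def Dv {m : ℕ} (β : Fin m → ℕ) (f : Evec m → Evec m → ℝ) : Evec m → Evec m → ℝ :=
  (List.finRange m).foldr (fun i g => (pd2 i)^[β i] g) f

/-!
Write `x⋆ = x / |x|²` and let `R_x` be the reflection in the hyperplane orthogonal to `x`. The
inversion `J[F](x, v) = |x|^(2-m) F(x⋆, R_x v)` preserves the null solutions of `𝒟_k`. For
`P ∈ ℋ_k` it sends `⟨b, x⟩ P(v)`, which is linear in `x` and hence trivially annihilated, to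
`⟨b, x⟩ |x|^(-m) P(R_x v)`, which for `b = e_m` is the Poisson kernel; so the kernel must be
a null solution away from the origin. That it is can be checked without the inversion: the computation
only uses the product rule, Euler's identity and harmonicity of `P`, so it is purely algebraic.
By the reproducing property the integral over the sphere of `Z_k(R_w u, v) f(t, u)` is
`f(t, R_w v)`, and since homogeneous polynomials of degree `k` are interpolated by finitely many
of their values, `P_H[f]` is a finite sum of convolutions in `x` alone with coefficients depending
on `v`, which lets `𝒟_k` pass under the integral sign.

For the `L^p` bound, `|Z_k| ≤ dim ℋ_k` reduces `P_H` to the classical Poisson kernel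
`y / |x - t|^m`, whose mass over the boundary does not depend on `y` by scaling, and Young's
convolution inequality applies.
-/

open scoped ContDiff

section VectorCalculus

variable {ι A : Type*} [CommRing A] [Algebra ℝ A]

/-- The gradient of `f` with respect to a finite family `U` of derivations. -/
def grad (U : ι → Derivation ℝ A A) (f : A) : ι → A := fun i => U i f

/-- The divergence of the vector `c` with respect to a finite family `U` of derivations. -/
def divg [Fintype ι] (U : ι → Derivation ℝ A A) (c : ι → A) : A := ∑ i, U i (c i)

variable (U : ι → Derivation ℝ A A)

lemma grad_add (f g : A) : grad U (f + g) = grad U f + grad U g :=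
  funext fun i => map_add (U i) f g

lemma grad_sub (f g : A) : grad U (f - g) = grad U f - grad U g :=
  funext fun i => map_sub (U i) f g

lemma grad_neg (f : A) : grad U (-f) = -grad U f :=
  funext fun i => map_neg (U i) f

lemma grad_mul (f g : A) : grad U (f * g) = f • grad U g + g • grad U f :=
  funext fun i => (U i).leibniz f g

lemma grad_zero : grad U (0 : A) = 0 :=
  funext fun i => map_zero (U i)

lemma grad_one : grad U (1 : A) = 0 :=
  funext fun i => (U i).map_one_eq_zero

lemma grad_natCast (n : ℕ) : grad U (n : A) = 0 :=
  funext fun i => (U i).map_natCast n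

lemma grad_intCast (n : ℤ) : grad U (n : A) = 0 :=
  funext fun i => (U i).map_intCast n

lemma grad_ofNat (n : ℕ) [n.AtLeastTwo] : grad U (ofNat(n) : A) = 0 :=
  grad_natCast U n

variable [Fintype ι]

lemma divg_zero : divg U 0 = 0 := by
  simp [divg]

lemma divg_add (c d : ι → A) : divg U (c + d) = divg U c + divg U d := by
  simp [divg, Finset.sum_add_distrib]

lemma divg_sub (c d : ι → A) : divg U (c - d) = divg U c - divg U d := by
  simp [divg]

lemma divg_smul (f : A) (c : ι → A) : divg U (f • c) = f * divg U c + grad U f ⬝ᵥ c := by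
  simp [divg, grad, dotProduct, Finset.sum_add_distrib, Finset.mul_sum, mul_comm]

lemma divg_algebraMap (b : ι → ℝ) : divg U (algebraMap ℝ A ∘ b) = 0 := by
  simp [divg]

lemma divg_grad_mul (W : ι → Derivation ℝ A A) (f g : A) :
    divg U (grad W (f * g)) = f * divg U (grad W g) + grad U f ⬝ᵥ grad W g
      + (g * divg U (grad W f) + grad U g ⬝ᵥ grad W f) := by
  rw [grad_mul, divg_add, divg_smul, divg_smul]

end VectorCalculus

section Euler

open MvPolynomial

variable {ι : Type*}

lemma pderiv_comm (i j : ι) (r : MvPolynomial ι ℝ) :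
    pderiv i (pderiv j r) = pderiv j (pderiv i r) := by
  classical
  have h : ⁅pderiv (R := ℝ) i, pderiv (R := ℝ) j⁆ = 0 :=
    derivation_ext fun l => by
      simp [Derivation.commutator_apply, pderiv_X, Pi.single_apply, apply_ite]
  simpa [Derivation.commutator_apply, sub_eq_zero] using congrArg (fun D => D r) h

variable [Fintype ι] {r : MvPolynomial ι ℝ} {κ : ℤ}

/-- Euler's relation `∑ Xᵢ ∂ᵢr = κ r`, satisfied by homogeneous polynomials of degree `κ`. The
degree is an integer so that it can be lowered by differentiation without truncation. -/
def Euler (κ : ℤ) (r : MvPolynomial ι ℝ) : Prop :=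
  ∑ i, X i * pderiv i r = (κ : MvPolynomial ι ℝ) * r

/-- The polynomial `r` is annihilated by the Laplacian. -/
def IsHarmonicPoly (r : MvPolynomial ι ℝ) : Prop := ∑ i, pderiv i (pderiv i r) = 0

lemma Euler.pderiv (h : Euler κ r) (l : ι) : Euler (κ - 1) (pderiv l r) := by
  classical
  have h' := congrArg (MvPolynomial.pderiv l) h
  simp only [map_sum, pderiv_mul, pderiv_X, Pi.single_apply, ite_mul, one_mul, zero_mul,
    Finset.sum_add_distrib, Finset.sum_ite_eq', Finset.mem_univ, if_true, Derivation.map_intCast,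
    pderiv_comm l] at h'
  unfold Euler
  push_cast
  linear_combination h'

/-- The derivative `∑ bᵢ ∂ᵢ` of polynomials in the direction `b`. -/
def dirPderiv (b : ι → ℝ) : MvPolynomial ι ℝ →ₗ[ℝ] MvPolynomial ι ℝ :=
  ∑ l, b l • (MvPolynomial.pderiv l).toLinearMap

lemma dirPderiv_apply (b : ι → ℝ) (r : MvPolynomial ι ℝ) :
    dirPderiv b r = ∑ l, b l • MvPolynomial.pderiv l r := by
  simp [dirPderiv]

lemma Euler.dirPderiv (h : Euler κ r) (b : ι → ℝ) : Euler (κ - 1) (dirPderiv b r) := by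
  rw [dirPderiv_apply]
  unfold Euler
  simp only [map_sum, Derivation.map_smul, Finset.mul_sum]
  rw [Finset.sum_comm]
  refine Finset.sum_congr rfl fun l _ => ?_
  rw [mul_smul_comm, ← h.pderiv l, Finset.smul_sum]
  simp only [mul_smul_comm]

lemma IsHarmonicPoly.dirPderiv (h : IsHarmonicPoly r) (b : ι → ℝ) :
    IsHarmonicPoly (dirPderiv b r) := by
  rw [dirPderiv_apply]
  simp only [IsHarmonicPoly, map_sum, Derivation.map_smul]
  rw [Finset.sum_comm]
  refine Finset.sum_eq_zero fun l _ => ?_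
  simp only [← Finset.smul_sum, pderiv_comm _ l]
  rw [← map_sum, (h : _ = _), map_zero, smul_zero]

lemma derivation_aeval {A : Type*} [CommRing A] [Algebra ℝ A] (D : Derivation ℝ A A) (q : ι → A)
    (r : MvPolynomial ι ℝ) : D (aeval q r) = ∑ j, D (q j) * aeval q (MvPolynomial.pderiv j r) := by
  classical
  induction r using MvPolynomial.induction_on with
  | C c => simp
  | add r s hr hs => simp only [map_add, hr, hs, mul_add, Finset.sum_add_distrib]
  | mul_X r n hr =>
    simp only [map_mul, aeval_X, Derivation.leibniz, hr, smul_eq_mul, pderiv_X, Pi.single_apply,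
      map_add, mul_add, Finset.sum_add_distrib, apply_ite (aeval q), map_zero, mul_ite, mul_one,
      mul_zero, Finset.sum_ite_eq, Finset.mem_univ, if_true, Finset.mul_sum]
    rw [mul_comm]
    congr 1
    exact Finset.sum_congr rfl fun _ _ => by ring

end Euler

/-- The formal setting of the kernel computation: coordinates `w`, `v` with coordinate derivations
`X i = ∂/∂wᵢ` and `V i = ∂/∂vᵢ`, together with functions `σ = |w|⁻²` and `ρ = |w|⁻ᵐ`, where `m` is
the number of coordinates. -/
structure ReflFrame (ι A : Type*) [Fintype ι] [DecidableEq ι] [CommRing A] [Algebra ℝ A] where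
  X : ι → Derivation ℝ A A
  V : ι → Derivation ℝ A A
  w : ι → A
  v : ι → A
  σ : A
  ρ : A
  X_w : ∀ i j, X i (w j) = if i = j then 1 else 0
  X_v : ∀ i j, X i (v j) = 0
  V_w : ∀ i j, V i (w j) = 0
  V_v : ∀ i j, V i (v j) = if i = j then 1 else 0
  σ_mul : σ * w ⬝ᵥ w = 1
  ρ_mul_self : ρ * ρ = σ ^ Fintype.card ι

namespace ReflFrame

open MvPolynomial

variable {ι A : Type*} [Fintype ι] [DecidableEq ι] [CommRing A] [Algebra ℝ A] (F : ReflFrame ι A)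

local notation "𝐦" => (Fintype.card ι : A)

/-- The coordinates of the reflection `R_w v`. -/
def q : ι → A := F.v - (2 * F.σ * F.w ⬝ᵥ F.v) • F.w

/-- The pairing `⟨w, R_w v⟩`. -/
def a : A := F.w ⬝ᵥ F.q

lemma a_eq : F.a = -(F.w ⬝ᵥ F.v) := by
  simp only [a, q, dotProduct_sub, dotProduct_smul, smul_eq_mul]
  linear_combination (-2 * F.w ⬝ᵥ F.v) * F.σ_mul

lemma v_eq : F.v = F.q - (2 * F.σ * F.a) • F.w := by
  rw [a_eq, q, sub_sub, ← add_smul]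
  simp

lemma q_dotProduct_q : F.q ⬝ᵥ F.q = F.v ⬝ᵥ F.v := by
  simp only [q, sub_dotProduct, dotProduct_sub, smul_dotProduct, dotProduct_smul, smul_eq_mul,
    dotProduct_comm F.v F.w]
  linear_combination (4 * F.σ * (F.w ⬝ᵥ F.v) ^ 2) * F.σ_mul

lemma isUnit_two_mul_ρ : IsUnit (2 * F.ρ) := by
  have h2 : IsUnit (2 : A) := by
    simpa only [map_ofNat] using (IsUnit.mk0 (2 : ℝ) two_ne_zero).map (algebraMap ℝ A)
  have hσ : IsUnit F.σ := .of_mul_eq_one _ F.σ_mul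
  exact h2.mul (isUnit_of_mul_isUnit_left (F.ρ_mul_self ▸ hσ.pow _))

lemma divg_X_w : divg F.X F.w = 𝐦 := by
  simp [divg, F.X_w]

lemma divg_V_w : divg F.V F.w = 0 := by
  simp [divg, F.V_w]

lemma grad_X_w_dotProduct_v : grad F.X (F.w ⬝ᵥ F.v) = F.v := by
  ext i
  simp [grad, dotProduct, F.X_w, F.X_v]

lemma grad_V_w_dotProduct_v : grad F.V (F.w ⬝ᵥ F.v) = F.w := by
  ext i
  simp [grad, dotProduct, F.V_w, F.V_v]

lemma grad_X_linear (b : ι → ℝ) :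
    grad F.X ((algebraMap ℝ A ∘ b) ⬝ᵥ F.w) = algebraMap ℝ A ∘ b := by
  ext i
  simp [grad, dotProduct, F.X_w]

lemma grad_V_linear (b : ι → ℝ) : grad F.V ((algebraMap ℝ A ∘ b) ⬝ᵥ F.w) = 0 := by
  ext i
  simp [grad, dotProduct, F.V_w]

lemma grad_σ_of_grad_normSq {U : ι → Derivation ℝ A A} {c : ι → A}
    (h : grad U (F.w ⬝ᵥ F.w) = (2 : A) • c) : grad U F.σ = (-2 * F.σ ^ 2) • c := by
  have hσ := congrArg (grad U) F.σ_mul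
  rw [grad_mul, h, grad_one] at hσ
  ext i
  have hi := congrFun hσ i
  simp only [Pi.add_apply, Pi.smul_apply, smul_eq_mul, Pi.zero_apply] at hi ⊢
  linear_combination F.σ * hi - grad U F.σ i * F.σ_mul

lemma grad_X_σ : grad F.X F.σ = (-2 * F.σ ^ 2) • F.w :=
  F.grad_σ_of_grad_normSq <| by
    ext i; simp [grad, dotProduct, F.X_w, Finset.sum_add_distrib, two_mul]

lemma grad_V_σ : grad F.V F.σ = 0 :=
  (F.grad_σ_of_grad_normSq (c := 0) <| by ext i; simp [grad, dotProduct, F.V_w]).trans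
    (smul_zero _)

lemma grad_ρ_of_grad_σ {U : ι → Derivation ℝ A A} {c : ι → A}
    (h : grad U F.σ = (-2 * F.σ) • c) : grad U F.ρ = (-𝐦 * F.ρ) • c := by
  ext i
  have hσ : U i F.σ = -2 * F.σ * c i := congrFun h i
  have hpow : 𝐦 * F.σ ^ (Fintype.card ι - 1) * F.σ = 𝐦 * F.σ ^ Fintype.card ι := by
    rcases Nat.eq_zero_or_pos (Fintype.card ι) with h0 | h0
    · simp [h0]
    · rw [mul_assoc, ← pow_succ, Nat.sub_add_cancel h0]
  have hρ := congrArg (U i) F.ρ_mul_self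
  simp only [Derivation.leibniz, Derivation.leibniz_pow, hσ, smul_eq_mul, nsmul_eq_mul] at hρ
  apply F.isUnit_two_mul_ρ.mul_left_cancel
  simp only [grad, Pi.smul_apply, smul_eq_mul]
  linear_combination hρ - 2 * c i * hpow + 2 * 𝐦 * c i * F.ρ_mul_self

lemma grad_X_ρ : grad F.X F.ρ = (-𝐦 * F.σ * F.ρ) • F.w := by
  rw [F.grad_ρ_of_grad_σ (c := F.σ • F.w) (by rw [grad_X_σ, smul_smul]; congr 1; ring), smul_smul]
  congr 1
  ring

lemma grad_V_ρ : grad F.V F.ρ = 0 :=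
  (F.grad_ρ_of_grad_σ (c := 0) (by rw [grad_V_σ, smul_zero])).trans (smul_zero _)

lemma grad_X_a : grad F.X F.a = (2 * F.σ * F.a) • F.w - F.q := by
  rw [← neg_sub, ← v_eq, a_eq, grad_neg, grad_X_w_dotProduct_v]

lemma grad_V_a : grad F.V F.a = -F.w := by
  rw [a_eq, grad_neg, grad_V_w_dotProduct_v]

lemma X_q (i j : ι) :
    F.X i (F.q j) = 2 * F.σ * ((if i = j then F.a else 0) - F.q i * F.w j) := by
  have hq : F.q j = F.v j + 2 * F.σ * F.a * F.w j := by rw [a_eq]; simp [q]; ring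
  have ha : F.X i F.a = 2 * F.σ * F.a * F.w i - F.q i := congrFun F.grad_X_a i
  have hσ : F.X i F.σ = -2 * F.σ ^ 2 * F.w i := congrFun F.grad_X_σ i
  have h2 : F.X i 2 = 0 := congrFun (grad_ofNat F.X 2) i
  rw [hq]
  simp only [map_add, Derivation.leibniz, F.X_v, F.X_w, ha, hσ, h2, smul_eq_mul]
  split_ifs <;> ring

lemma V_q (i j : ι) :
    F.V i (F.q j) = (if i = j then 1 else 0) - 2 * F.σ * F.w i * F.w j := by
  have hq : F.q j = F.v j + 2 * F.σ * F.a * F.w j := by rw [a_eq]; simp [q]; ring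
  have ha : F.V i F.a = -F.w i := congrFun F.grad_V_a i
  have hσ : F.V i F.σ = 0 := congrFun F.grad_V_σ i
  have h2 : F.V i 2 = 0 := congrFun (grad_ofNat F.V 2) i
  rw [hq]
  simp only [map_add, Derivation.leibniz, F.V_v, F.V_w, ha, hσ, h2, smul_eq_mul]
  split_ifs <;> ring

lemma divg_X_q : divg F.X F.q = 2 * F.σ * ((𝐦 - 1) * F.a) := by
  have : ∑ i, F.q i * F.w i = F.a := dotProduct_comm _ _
  simp only [divg, X_q, if_true, ← Finset.mul_sum, Finset.sum_sub_distrib, Finset.sum_const,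
    Finset.card_univ, nsmul_eq_mul, this]
  ring

lemma divg_V_q : divg F.V F.q = 𝐦 - 2 := by
  have : ∑ i, F.w i * F.w i = F.w ⬝ᵥ F.w := rfl
  simp only [divg, V_q, if_true, mul_assoc, ← Finset.mul_sum, Finset.sum_sub_distrib,
    Finset.sum_const, Finset.card_univ, nsmul_eq_mul, this, F.σ_mul]
  ring

/-- The `n`-fold derivative of a polynomial in the direction `w`, evaluated at `q = R_w v`. -/
def iterDeriv : ℕ → MvPolynomial ι ℝ →ₗ[ℝ] A
  | 0 => (aeval F.q).toLinearMap
  | n + 1 => ∑ l, LinearMap.mulLeft ℝ (F.w l) ∘ₗ iterDeriv n ∘ₗ (pderiv l).toLinearMap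

/-- The gradient of a polynomial, with `iterDeriv n` applied to its entries. -/
def iterGrad (n : ℕ) (r : MvPolynomial ι ℝ) : ι → A := fun i => F.iterDeriv n (pderiv i r)

lemma iterDeriv_zero (r : MvPolynomial ι ℝ) : F.iterDeriv 0 r = aeval F.q r := rfl

lemma iterDeriv_succ (n : ℕ) (r : MvPolynomial ι ℝ) :
    F.iterDeriv (n + 1) r = ∑ l, F.w l * F.iterDeriv n (pderiv l r) := by
  simp [iterDeriv]

lemma w_dotProduct_iterGrad (n : ℕ) (r : MvPolynomial ι ℝ) :
    F.w ⬝ᵥ F.iterGrad n r = F.iterDeriv (n + 1) r :=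
  (F.iterDeriv_succ n r).symm

lemma q_dotProduct_iterGrad (n : ℕ) {κ : ℤ} {r : MvPolynomial ι ℝ} (h : Euler κ r) :
    F.q ⬝ᵥ F.iterGrad n r = (κ - n) * F.iterDeriv n r := by
  induction n generalizing r κ with
  | zero => simpa [dotProduct, iterGrad, iterDeriv_zero] using congrArg (aeval F.q) h
  | succ n ih =>
    simp only [dotProduct, iterGrad, iterDeriv_succ, Finset.mul_sum]
    rw [Finset.sum_comm]
    refine Finset.sum_congr rfl fun l _ => ?_
    have hl : ∑ i, F.q i * F.iterDeriv n (pderiv l (pderiv i r))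
        = ((κ - 1 : ℤ) - n) * F.iterDeriv n (pderiv l r) := by
      simp_rw [pderiv_comm l]
      exact ih (h.pderiv l)
    simp only [mul_left_comm (F.q _), ← Finset.mul_sum, hl]
    push_cast
    ring

lemma linear_dotProduct_iterGrad (b : ι → ℝ) (n : ℕ) (p : MvPolynomial ι ℝ) :
    (algebraMap ℝ A ∘ b) ⬝ᵥ F.iterGrad n p = F.iterDeriv n (dirPderiv b p) := by
  simp only [dotProduct, iterGrad, dirPderiv_apply, map_sum, map_smul, Function.comp_apply,
    ← Algebra.smul_def]

lemma sum_w_mul_iterDeriv_pderiv (n : ℕ) (i : ι) (r : MvPolynomial ι ℝ) :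
    ∑ l, F.w l * F.iterDeriv n (pderiv i (pderiv l r)) = F.iterDeriv (n + 1) (pderiv i r) := by
  simp only [iterDeriv_succ, pderiv_comm i]

lemma grad_X_iterDeriv (n : ℕ) (r : MvPolynomial ι ℝ) :
    grad F.X (F.iterDeriv n r) = (n : A) • F.iterGrad (n - 1) r +
      (2 * F.σ) • (F.a • F.iterGrad n r - F.iterDeriv (n + 1) r • F.q) := by
  ext i
  simp only [grad, iterGrad, Pi.add_apply, Pi.sub_apply, Pi.smul_apply, smul_eq_mul]
  induction n generalizing r with
  | zero =>
    simp only [iterDeriv_zero, iterDeriv_succ, derivation_aeval, X_q, mul_assoc, mul_sub, sub_mul,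
      ite_mul, mul_ite, zero_mul, mul_zero, Finset.sum_sub_distrib, Finset.sum_ite_eq,
      Finset.mem_univ, if_true, ← Finset.mul_sum]
    push_cast
    ring
  | succ n ih =>
    have hn : (n : A) * ∑ l, F.w l * F.iterDeriv (n - 1) (pderiv i (pderiv l r))
        = n * F.iterDeriv n (pderiv i r) := by
      cases n with
      | zero => simp
      | succ n => rw [sum_w_mul_iterDeriv_pderiv, Nat.add_sub_cancel]
    have hsum : ∑ l, F.w l * F.X i (F.iterDeriv n (pderiv l r)) =
        n * F.iterDeriv n (pderiv i r) + 2 * F.σ * (F.a * F.iterDeriv (n + 1) (pderiv i r)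
          - F.iterDeriv (n + 2) r * F.q i) := by
      rw [← hn, ← sum_w_mul_iterDeriv_pderiv, F.iterDeriv_succ (n + 1)]
      simp only [ih, Finset.mul_sum, Finset.sum_mul, ← Finset.sum_sub_distrib,
        ← Finset.sum_add_distrib]
      exact Finset.sum_congr rfl fun _ _ => by ring
    simp only [F.iterDeriv_succ n r, map_sum, Derivation.leibniz, smul_eq_mul, F.X_w, mul_ite,
      mul_one, mul_zero, Finset.sum_add_distrib, Finset.sum_ite_eq, Finset.mem_univ, if_true, hsum,
      Nat.add_sub_cancel]
    push_cast
    ring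

lemma grad_V_iterDeriv (n : ℕ) (r : MvPolynomial ι ℝ) :
    grad F.V (F.iterDeriv n r) = F.iterGrad n r - (2 * F.σ * F.iterDeriv (n + 1) r) • F.w := by
  ext i
  simp only [grad, iterGrad, Pi.sub_apply, Pi.smul_apply, smul_eq_mul]
  induction n generalizing r with
  | zero =>
    simp only [iterDeriv_zero, iterDeriv_succ, derivation_aeval, V_q, mul_assoc, sub_mul, ite_mul,
      one_mul, zero_mul, Finset.sum_sub_distrib, Finset.sum_ite_eq, Finset.mem_univ, if_true,
      ← Finset.mul_sum]
    ring
  | succ n ih =>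
    rw [F.iterDeriv_succ n r, ← sum_w_mul_iterDeriv_pderiv, F.iterDeriv_succ (n + 1)]
    simp only [map_sum, Derivation.leibniz, smul_eq_mul, F.V_w, mul_zero, add_zero, ih,
      Finset.mul_sum, Finset.sum_mul, ← Finset.sum_sub_distrib]
    exact Finset.sum_congr rfl fun _ _ => by ring

section Harmonic

variable {κ : ℤ} {p : MvPolynomial ι ℝ}

lemma sum_iterDeriv_pderiv_pderiv (hp : IsHarmonicPoly p) (n : ℕ) :
    ∑ i, F.iterDeriv n (pderiv i (pderiv i p)) = 0 := by
  rw [← map_sum, (hp : _ = _), map_zero]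

lemma divg_X_iterGrad (hE : Euler κ p) (hp : IsHarmonicPoly p) (n : ℕ) :
    divg F.X (F.iterGrad n p) = -(2 * F.σ * ((κ - (n + 1)) * F.iterDeriv (n + 1) p)) := by
  have hq : ∑ i, F.iterDeriv (n + 1) (pderiv i p) * F.q i
      = (κ - (n + 1)) * F.iterDeriv (n + 1) p := by
    rw [← Nat.cast_succ, ← F.q_dotProduct_iterGrad (n + 1) hE, dotProduct_comm]
    rfl
  change ∑ i, grad F.X (F.iterDeriv n (pderiv i p)) i = _
  simp only [grad_X_iterDeriv, iterGrad, Pi.add_apply, Pi.sub_apply, Pi.smul_apply, smul_eq_mul,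
    Finset.sum_add_distrib, Finset.sum_sub_distrib, ← Finset.mul_sum,
    F.sum_iterDeriv_pderiv_pderiv hp, hq]
  ring

lemma divg_V_iterGrad (hp : IsHarmonicPoly p) (n : ℕ) :
    divg F.V (F.iterGrad n p) = -(2 * F.σ * F.iterDeriv (n + 2) p) := by
  change ∑ i, grad F.V (F.iterDeriv n (pderiv i p)) i = _
  simp only [grad_V_iterDeriv, iterGrad, Pi.sub_apply, Pi.smul_apply, smul_eq_mul,
    Finset.sum_sub_distrib, F.sum_iterDeriv_pderiv_pderiv hp, F.iterDeriv_succ (n + 1) p,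
    Finset.mul_sum, zero_sub]
  exact congrArg _ (Finset.sum_congr rfl fun _ _ => by ring)

/-- The Laplacian in the variable `w`. -/
def lap (f : A) : A := divg F.X (grad F.X f)

/-- The mixed operator `∑ᵢ ∂_{vᵢ} ∂_{wᵢ}`. -/
def mixed (f : A) : A := divg F.V (grad F.X f)

lemma lap_mul (f g : A) :
    F.lap (f * g) = f * F.lap g + 2 * (grad F.X f ⬝ᵥ grad F.X g) + g * F.lap f := by
  rw [lap, divg_grad_mul, dotProduct_comm (grad F.X g), lap, lap]
  ring

lemma mixed_sub (f g : A) : F.mixed (f - g) = F.mixed f - F.mixed g := by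
  rw [mixed, grad_sub, divg_sub, mixed, mixed]

lemma mixed_mul {f : A} (hf : grad F.V f = 0) (g : A) :
    F.mixed (f * g) = f * F.mixed g + grad F.X f ⬝ᵥ grad F.V g + g * F.mixed f := by
  rw [mixed, divg_grad_mul, hf, zero_dotProduct, dotProduct_comm (grad F.V g), mixed, mixed]
  ring

lemma w_dotProduct_grad_V_iterDeriv (n : ℕ) (p : MvPolynomial ι ℝ) :
    F.w ⬝ᵥ grad F.V (F.iterDeriv n p) = -F.iterDeriv (n + 1) p := by
  rw [grad_V_iterDeriv, dotProduct_sub, dotProduct_smul, w_dotProduct_iterGrad, smul_eq_mul]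
  linear_combination (-2 * F.iterDeriv (n + 1) p) * F.σ_mul

lemma w_dotProduct_q : F.w ⬝ᵥ F.q = F.a := rfl

lemma q_dotProduct_w : F.q ⬝ᵥ F.w = F.a := dotProduct_comm _ _

lemma v_dotProduct_w : F.v ⬝ᵥ F.w = -F.a := by
  rw [a_eq, neg_neg, dotProduct_comm]

lemma w_dotProduct_grad_X_iterDeriv (n : ℕ) (p : MvPolynomial ι ℝ) :
    F.w ⬝ᵥ grad F.X (F.iterDeriv n p) = n * F.iterDeriv n p := by
  rw [grad_X_iterDeriv]
  simp only [dotProduct_add, dotProduct_sub, dotProduct_smul, smul_eq_mul, w_dotProduct_iterGrad,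
    w_dotProduct_q]
  cases n with
  | zero => simp [mul_comm]
  | succ n => rw [Nat.add_sub_cancel]; ring

lemma q_dotProduct_grad_V_iterDeriv (hE : Euler κ p) (n : ℕ) :
    F.q ⬝ᵥ grad F.V (F.iterDeriv n p)
      = (κ - n) * F.iterDeriv n p - 2 * F.σ * F.a * F.iterDeriv (n + 1) p := by
  rw [grad_V_iterDeriv, dotProduct_sub, dotProduct_smul, F.q_dotProduct_iterGrad n hE,
    q_dotProduct_w, smul_eq_mul]
  ring

lemma lap_iterDeriv_zero (hE : Euler κ p) (hp : IsHarmonicPoly p) :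
    F.lap (F.iterDeriv 0 p) = -4 * κ * F.σ * F.iterDeriv 0 p + 4 * F.σ ^ 2 *
      (F.q ⬝ᵥ F.q * F.iterDeriv 2 p - (𝐦 + 2 * κ - 4) * F.a * F.iterDeriv 1 p) := by
  rw [lap, grad_X_iterDeriv]
  simp only [divg_add, divg_sub, divg_smul, F.divg_X_iterGrad hE hp, divg_X_q, grad_mul,
    grad_ofNat, grad_natCast, grad_X_σ, grad_X_a, grad_X_iterDeriv, add_dotProduct, sub_dotProduct,
    smul_dotProduct, dotProduct_sub, dotProduct_smul, smul_eq_mul, w_dotProduct_iterGrad,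
    F.q_dotProduct_iterGrad _ hE, w_dotProduct_q,
    dotProduct_comm (F.iterGrad _ _) F.q, zero_dotProduct, smul_zero, add_zero, zero_add]
  push_cast
  ring

lemma mixed_iterDeriv (hE : Euler κ p) (hp : IsHarmonicPoly p) (n : ℕ) :
    F.mixed (F.iterDeriv n p) = -2 * (𝐦 + κ - 2) * F.σ * F.iterDeriv (n + 1) p := by
  have hn : (n : A) * divg F.V (F.iterGrad (n - 1) p) = -2 * n * F.σ * F.iterDeriv (n + 1) p := by
    cases n with
    | zero => simp
    | succ n => rw [Nat.add_sub_cancel, F.divg_V_iterGrad hp]; ring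
  rw [mixed, grad_X_iterDeriv, divg_add, divg_smul, hn]
  simp only [divg_sub, divg_smul, F.divg_V_iterGrad hp, divg_V_q, grad_mul, grad_ofNat,
    grad_natCast, grad_V_σ, grad_V_a, neg_dotProduct, w_dotProduct_iterGrad,
    dotProduct_comm (grad F.V _) F.q, F.q_dotProduct_grad_V_iterDeriv hE, smul_zero, add_zero,
    zero_dotProduct]
  push_cast
  ring

lemma v_dotProduct_grad_X_iterDeriv (hE : Euler κ p) (n : ℕ) :
    F.v ⬝ᵥ grad F.X (F.iterDeriv n p) = n * (κ - n + 1) * F.iterDeriv (n - 1) p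
      + 2 * F.σ * ((κ - 2 * n) * F.a * F.iterDeriv n p - F.q ⬝ᵥ F.q * F.iterDeriv (n + 1) p) := by
  have hn : (n : A) * F.q ⬝ᵥ F.iterGrad (n - 1) p = n * (κ - n + 1) * F.iterDeriv (n - 1) p := by
    cases n with
    | zero => simp
    | succ n => rw [F.q_dotProduct_iterGrad _ hE, Nat.add_sub_cancel]; push_cast; ring
  rw [v_eq, sub_dotProduct, smul_dotProduct, w_dotProduct_grad_X_iterDeriv, grad_X_iterDeriv,
    dotProduct_add, dotProduct_smul, smul_eq_mul, hn]
  simp only [dotProduct_sub, dotProduct_smul, smul_eq_mul, F.q_dotProduct_iterGrad _ hE]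
  ring

end Harmonic

section Kernel

variable (b : ι → ℝ)

local notation "β" => (algebraMap ℝ A ∘ b)

/-- The scalar Poisson kernel `|w|⁻ᵐ ⟨b, w⟩`. -/
def scalarKernel : A := F.ρ * β ⬝ᵥ F.w

lemma grad_X_scalarKernel :
    grad F.X (F.scalarKernel b) = F.ρ • β - (𝐦 * F.σ * F.scalarKernel b) • F.w := by
  rw [scalarKernel, grad_mul, grad_X_linear, grad_X_ρ, smul_smul, sub_eq_add_neg, ← neg_smul]
  congr 2
  ring

lemma grad_V_scalarKernel : grad F.V (F.scalarKernel b) = 0 := by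
  rw [scalarKernel, grad_mul, grad_V_linear, grad_V_ρ, smul_zero, smul_zero, add_zero]

lemma ρ_mul_linear : F.ρ * β ⬝ᵥ F.w = F.scalarKernel b := rfl

lemma lap_scalarKernel : F.lap (F.scalarKernel b) = 0 := by
  rw [lap, grad_X_scalarKernel]
  simp only [divg_sub, divg_smul, divg_algebraMap, divg_X_w, grad_mul, grad_natCast, grad_X_σ,
    grad_X_ρ, grad_X_scalarKernel, add_dotProduct, sub_dotProduct, smul_dotProduct, smul_eq_mul,
    dotProduct_comm F.w β, smul_zero, add_zero, mul_zero, zero_add]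
  linear_combination ((2 * 𝐦 + 𝐦 ^ 2) * F.σ * F.scalarKernel b) * F.σ_mul
    - 2 * 𝐦 * F.σ * F.ρ_mul_linear b

lemma v_dotProduct_grad_X_scalarKernel :
    F.v ⬝ᵥ grad F.X (F.scalarKernel b)
      = F.ρ * β ⬝ᵥ F.q + (𝐦 - 2) * F.σ * F.a * F.scalarKernel b := by
  have hv : F.v ⬝ᵥ β = β ⬝ᵥ F.q - 2 * F.σ * F.a * β ⬝ᵥ F.w := by
    rw [dotProduct_comm, v_eq, dotProduct_sub, dotProduct_smul, smul_eq_mul]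
  rw [grad_X_scalarKernel, dotProduct_sub, dotProduct_smul, dotProduct_smul, v_dotProduct_w, hv,
    smul_eq_mul, smul_eq_mul]
  linear_combination (-2 * F.σ * F.a) * F.ρ_mul_linear b

variable {κ : ℤ} {p : MvPolynomial ι ℝ} (hE : Euler κ p) (hp : IsHarmonicPoly p)

include hE hp

lemma lap_kernel : F.lap (F.scalarKernel b * F.iterDeriv 0 p) =
    4 * F.σ * F.ρ * (F.a * F.iterDeriv 0 (dirPderiv b p) - β ⬝ᵥ F.q * F.iterDeriv 1 p)
      - 4 * κ * F.σ * F.scalarKernel b * F.iterDeriv 0 p + 4 * F.σ ^ 2 * F.scalarKernel b *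
        (F.q ⬝ᵥ F.q * F.iterDeriv 2 p - (𝐦 + 2 * κ - 4) * F.a * F.iterDeriv 1 p) := by
  have hβ : β ⬝ᵥ grad F.X (F.iterDeriv 0 p)
      = 2 * F.σ * (F.a * F.iterDeriv 0 (dirPderiv b p) - β ⬝ᵥ F.q * F.iterDeriv 1 p) := by
    simp only [grad_X_iterDeriv, dotProduct_add, dotProduct_sub, dotProduct_smul, smul_eq_mul,
      linear_dotProduct_iterGrad, zero_add, Nat.cast_zero, zero_mul]
    ring
  rw [lap_mul, F.lap_iterDeriv_zero hE hp, lap_scalarKernel, grad_X_scalarKernel, sub_dotProduct,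
    smul_dotProduct, smul_dotProduct, hβ, w_dotProduct_grad_X_iterDeriv, smul_eq_mul, smul_eq_mul]
  push_cast
  ring

lemma mixed_mul_iterDeriv {f s t : A} (hf : grad F.V f = 0) (hs : grad F.V s = 0)
    (ht : grad F.V t = 0) (hX : grad F.X f = s • β - t • F.w) (n : ℕ) :
    F.mixed (f * F.iterDeriv n p) = s * F.iterDeriv n (dirPderiv b p)
      + (t - 2 * F.σ * (s * β ⬝ᵥ F.w + (𝐦 + κ - 2) * f)) * F.iterDeriv (n + 1) p := by
  have hβ : β ⬝ᵥ grad F.V (F.iterDeriv n p)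
      = F.iterDeriv n (dirPderiv b p) - 2 * F.σ * β ⬝ᵥ F.w * F.iterDeriv (n + 1) p := by
    rw [grad_V_iterDeriv, dotProduct_sub, dotProduct_smul, linear_dotProduct_iterGrad, smul_eq_mul]
    ring
  have hmixed : F.mixed f = 0 := by
    rw [mixed, hX, divg_sub, divg_smul, divg_smul, hs, ht, divg_algebraMap, divg_V_w]
    simp only [mul_zero, zero_dotProduct, add_zero, sub_zero]
  rw [F.mixed_mul hf, F.mixed_iterDeriv hE hp, hmixed, hX, sub_dotProduct, smul_dotProduct,
    smul_dotProduct, hβ, w_dotProduct_grad_V_iterDeriv, smul_eq_mul, smul_eq_mul]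
  ring

lemma mixed_kernel : F.mixed (F.scalarKernel b * F.iterDeriv 0 p) =
    F.ρ * F.iterDeriv 0 (dirPderiv b p)
      - (𝐦 + 2 * κ - 2) * (F.σ * F.scalarKernel b * F.iterDeriv 1 p) := by
  have ht : grad F.V (𝐦 * F.σ * F.scalarKernel b) = 0 := by
    simp only [grad_mul, grad_natCast, grad_V_σ, grad_V_scalarKernel, smul_zero, add_zero]
  rw [F.mixed_mul_iterDeriv b hE hp (F.grad_V_scalarKernel b) F.grad_V_ρ ht
    (F.grad_X_scalarKernel b), ρ_mul_linear]
  ring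

lemma mixed_ρ_mul_iterDeriv : F.mixed (F.ρ * F.iterDeriv 0 p)
    = -(𝐦 + 2 * κ - 4) * F.σ * F.ρ * F.iterDeriv 1 p := by
  have ht : grad F.V (𝐦 * F.σ * F.ρ) = 0 := by
    simp only [grad_mul, grad_natCast, grad_V_σ, grad_V_ρ, smul_zero, add_zero]
  have hX : grad F.X F.ρ = (0 : A) • (algebraMap ℝ A ∘ (0 : ι → ℝ)) - (𝐦 * F.σ * F.ρ) • F.w := by
    rw [grad_X_ρ, zero_smul, zero_sub, ← neg_smul, neg_mul, neg_mul]
  rw [F.mixed_mul_iterDeriv 0 hE hp F.grad_V_ρ (grad_zero F.V) ht hX]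
  ring

lemma mixed_σ_mul_kernel : F.mixed (F.σ * F.scalarKernel b * F.iterDeriv 1 p)
    = F.σ * F.ρ * F.iterDeriv 1 (dirPderiv b p)
      - (𝐦 + 2 * κ - 4) * F.σ ^ 2 * F.scalarKernel b * F.iterDeriv 2 p := by
  have hf : grad F.V (F.σ * F.scalarKernel b) = 0 := by
    simp only [grad_mul, grad_V_σ, grad_V_scalarKernel, smul_zero, add_zero]
  have hs : grad F.V (F.σ * F.ρ) = 0 := by
    simp only [grad_mul, grad_V_σ, grad_V_ρ, smul_zero, add_zero]
  have ht : grad F.V ((𝐦 + 2) * F.σ * (F.σ * F.scalarKernel b)) = 0 := by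
    simp only [grad_mul, grad_add, grad_natCast, grad_ofNat, grad_V_σ, hf, smul_zero, add_zero]
  have hX : grad F.X (F.σ * F.scalarKernel b)
      = (F.σ * F.ρ) • β - ((𝐦 + 2) * F.σ * (F.σ * F.scalarKernel b)) • F.w := by
    rw [grad_mul, grad_X_σ, grad_X_scalarKernel]
    module
  rw [F.mixed_mul_iterDeriv b hE hp hf hs ht hX]
  linear_combination (-2 * F.σ ^ 2 * F.iterDeriv 2 p) * F.ρ_mul_linear b

lemma mixed_mixed_kernel : F.mixed (F.mixed (F.scalarKernel b * F.iterDeriv 0 p)) =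
    (𝐦 + 2 * κ - 4) * ((𝐦 + 2 * κ - 2) * F.σ ^ 2 * F.scalarKernel b * F.iterDeriv 2 p
      - 2 * F.σ * F.ρ * F.iterDeriv 1 (dirPderiv b p)) := by
  have hN (U : ι → Derivation ℝ A A) : grad U (𝐦 + 2 * κ - 2) = 0 := by
    simp only [grad_add, grad_sub, grad_mul, grad_natCast, grad_intCast, grad_ofNat, smul_zero,
      add_zero, sub_zero]
  rw [F.mixed_kernel b hE hp, mixed_sub, F.mixed_mul (hN F.V),
    F.mixed_ρ_mul_iterDeriv (hE.dirPderiv b) (hp.dirPderiv b), F.mixed_σ_mul_kernel b hE hp,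
    mixed, hN, zero_dotProduct, divg_zero]
  push_cast
  ring

lemma v_dotProduct_grad_mixed_kernel :
    F.v ⬝ᵥ grad F.X (F.mixed (F.scalarKernel b * F.iterDeriv 0 p)) =
      F.σ * F.ρ * ((𝐦 + 2 * κ - 2) * F.a * F.iterDeriv 0 (dirPderiv b p)
        - 2 * F.q ⬝ᵥ F.q * F.iterDeriv 1 (dirPderiv b p))
      - (𝐦 + 2 * κ - 2) * (F.σ * F.ρ * β ⬝ᵥ F.q * F.iterDeriv 1 p
        + F.σ * F.scalarKernel b * (κ * F.iterDeriv 0 p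
          + F.σ * ((𝐦 + 2 * κ - 4) * F.a * F.iterDeriv 1 p
            - 2 * F.q ⬝ᵥ F.q * F.iterDeriv 2 p))) := by
  rw [F.mixed_kernel b hE hp]
  simp only [grad_sub, grad_add, grad_mul, grad_natCast, grad_intCast, grad_ofNat, grad_X_σ,
    grad_X_ρ, dotProduct_sub, dotProduct_add,
    dotProduct_smul, smul_eq_mul, smul_zero, add_zero, sub_zero,
    v_dotProduct_w, v_dotProduct_grad_X_scalarKernel, F.v_dotProduct_grad_X_iterDeriv hE,
    F.v_dotProduct_grad_X_iterDeriv (hE.dirPderiv b)]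
  push_cast
  ring

theorem bosonic_kernel :
    (𝐦 + 2 * κ - 2) * (𝐦 + 2 * κ - 4) * F.lap (F.scalarKernel b * F.iterDeriv 0 p)
      - 4 * (𝐦 + 2 * κ - 4) *
        F.v ⬝ᵥ grad F.X (F.mixed (F.scalarKernel b * F.iterDeriv 0 p))
      + 4 * F.q ⬝ᵥ F.q * F.mixed (F.mixed (F.scalarKernel b * F.iterDeriv 0 p)) = 0 := by
  rw [F.lap_kernel b hE hp, F.mixed_mixed_kernel b hE hp, F.v_dotProduct_grad_mixed_kernel b hE hp]
  ring

end Kernel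

end ReflFrame

section SmoothFunctions

variable {E : Type*} {O : Set E}

/-- Extension by zero of a function defined on `O`. -/
def zeroExt (g : O → ℝ) : E → ℝ := Function.extend Subtype.val g 0

lemma zeroExt_coe (g : O → ℝ) (x : O) : zeroExt g x = g x :=
  Subtype.val_injective.extend_apply g 0 x

lemma zeroExt_of_mem (g : O → ℝ) {x : E} (hx : x ∈ O) : zeroExt g x = g ⟨x, hx⟩ :=
  zeroExt_coe g ⟨x, hx⟩

variable [NormedAddCommGroup E] [NormedSpace ℝ E]

variable (O) in
/-- The algebra of smooth real functions on `O`. -/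
def smoothAlg : Subalgebra ℝ (O → ℝ) where
  carrier := {g | ContDiffOn ℝ ∞ (zeroExt g) O}
  mul_mem' ha hb := (ContDiffOn.mul ha hb).congr fun x hx => by simp [zeroExt_of_mem _ hx]
  add_mem' ha hb := (ContDiffOn.add ha hb).congr fun x hx => by simp [zeroExt_of_mem _ hx]
  algebraMap_mem' r := (contDiffOn_const (c := r)).congr fun x hx => by simp [zeroExt_of_mem _ hx]

namespace smoothAlg

/-- The restriction to `O` of a function which is smooth on `O`. -/
def mk (f : E → ℝ) (hf : ContDiffOn ℝ ∞ f O) : smoothAlg O :=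
  ⟨fun x => f x, hf.congr fun x hx => by simp [zeroExt_of_mem _ hx]⟩

lemma ext_of {a b : smoothAlg O} (h : ∀ x : O, a.1 x = b.1 x) : a = b :=
  Subtype.ext (funext h)

lemma hasFDerivAt_of_eq (hO : IsOpen O) {f : E → ℝ} {g : smoothAlg O}
    (hfg : ∀ x : O, f x = g.1 x) (x : O) : HasFDerivAt f (fderiv ℝ (zeroExt g.1) x) x := by
  have hg : DifferentiableAt ℝ (zeroExt g.1) x :=
    (g.2.contDiffAt (hO.mem_nhds x.2)).differentiableAt (by simp)
  refine hg.hasFDerivAt.congr_of_eventuallyEq ?_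
  filter_upwards [hO.mem_nhds x.2] with y hy
  exact (hfg ⟨y, hy⟩).trans (zeroExt_coe g.1 ⟨y, hy⟩).symm

lemma fderiv_zeroExt_eq (hO : IsOpen O) {f : E → ℝ} {g : smoothAlg O} {x : O} {f' : E →L[ℝ] ℝ}
    (hfg : ∀ x : O, f x = g.1 x) (hf : HasFDerivAt f f' x) : fderiv ℝ (zeroExt g.1) x = f' :=
  (hasFDerivAt_of_eq hO hfg x).unique hf

/-- Differentiation in the direction `h`, as a derivation of `smoothAlg O`. -/
def dir (hO : IsOpen O) (h : E) : Derivation ℝ (smoothAlg O) (smoothAlg O) :=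
  have hd (g : smoothAlg O) (x : O) := hasFDerivAt_of_eq hO (zeroExt_coe g.1) x
  { toFun g := mk (fun x => fderiv ℝ (zeroExt g.1) x h)
      ((g.2.fderiv_of_isOpen hO (m := ∞) (by simp)).clm_apply contDiffOn_const)
    map_add' a b := ext_of fun x => congrArg (· h) <|
      fderiv_zeroExt_eq hO (f := zeroExt a.1 + zeroExt b.1) (by simp [zeroExt_coe])
        ((hd a x).add (hd b x))
    map_smul' c a := ext_of fun x => congrArg (· h) <|
      fderiv_zeroExt_eq hO (f := c • zeroExt a.1) (by simp [zeroExt_coe]) ((hd a x).const_smul c)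
    map_one_eq_zero' := ext_of fun x => congrArg (· h) <|
      fderiv_zeroExt_eq hO (f := 1) (by simp) (hasFDerivAt_const 1 x.1)
    leibniz' a b := ext_of fun x => by
      have hab := fderiv_zeroExt_eq hO (g := a * b) (f := zeroExt a.1 * zeroExt b.1)
        (by simp [zeroExt_coe]) ((hd a x).mul (hd b x))
      simpa [mk, zeroExt_coe] using congrArg (· h) hab }

lemma dir_apply (hO : IsOpen O) (h : E) {f : E → ℝ} {g : smoothAlg O} {x : O} {f' : E →L[ℝ] ℝ}
    (hfg : ∀ x : O, f x = g.1 x) (hf : HasFDerivAt f f' x) : (dir hO h g).1 x = f' h :=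
  congrArg (· h) (fderiv_zeroExt_eq hO hfg hf)

/-- The restriction to `O` of a continuous linear form. -/
def ofCLM (L : E →L[ℝ] ℝ) : smoothAlg O := mk L L.contDiff.contDiffOn

lemma dir_ofCLM (hO : IsOpen O) (h : E) (L : E →L[ℝ] ℝ) :
    dir hO h (ofCLM L) = algebraMap ℝ (smoothAlg O) (L h) :=
  ext_of fun _ => dir_apply hO h (fun _ => rfl) L.hasFDerivAt

/-- Evaluation at a point of `O`. -/
def evalAt (z : O) : smoothAlg O →ₐ[ℝ] ℝ :=
  (Pi.evalAlgHom ℝ (fun _ : O => ℝ) z).comp (smoothAlg O).val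

lemma evalAt_apply (z : O) (g : smoothAlg O) : evalAt z g = g.1 z := rfl

end smoothAlg

end SmoothFunctions

section SmoothReflFrame

variable {m : ℕ}

variable (m) in
/-- The domain `w ≠ 0` in the space of pairs `(w, v)`. -/
def offZero : Set (Evec m × Evec m) := {z | z.1 ≠ 0}

lemma isOpen_offZero : IsOpen (offZero m) := isOpen_ne_fun continuous_fst continuous_const

lemma norm_fst_ne_zero (z : offZero m) : ‖z.1.1‖ ≠ 0 := norm_ne_zero_iff.2 z.2

lemma contDiffOn_norm_pow_inv (n : ℕ) :
    ContDiffOn ℝ ∞ (fun z : Evec m × Evec m => (‖z.1‖ ^ n)⁻¹) (offZero m) :=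
  ((contDiff_fst.contDiffOn.norm ℝ fun _ hz => hz).pow n).inv fun _ hz =>
    pow_ne_zero n (norm_ne_zero_iff.2 hz)

variable (m) in
/-- The coordinates, their derivations and the powers of `|w|` on the algebra of smooth functions
of `(w, v)`, `w ≠ 0`. -/
def reflFrame : ReflFrame (Fin m) (smoothAlg (offZero m)) where
  X i := smoothAlg.dir isOpen_offZero (EuclideanSpace.single i 1, 0)
  V i := smoothAlg.dir isOpen_offZero (0, EuclideanSpace.single i 1)
  w i := smoothAlg.ofCLM (EuclideanSpace.proj i ∘L .fst ℝ (Evec m) (Evec m))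
  v i := smoothAlg.ofCLM (EuclideanSpace.proj i ∘L .snd ℝ (Evec m) (Evec m))
  σ := smoothAlg.mk _ (contDiffOn_norm_pow_inv 2)
  ρ := smoothAlg.mk _ (contDiffOn_norm_pow_inv m)
  X_w i j := by rw [smoothAlg.dir_ofCLM]; split_ifs with h <;> simp [h, eq_comm]
  X_v i j := by rw [smoothAlg.dir_ofCLM]; simp
  V_w i j := by rw [smoothAlg.dir_ofCLM]; simp
  V_v i j := by rw [smoothAlg.dir_ofCLM]; split_ifs with h <;> simp [h, eq_comm]
  σ_mul := smoothAlg.ext_of fun z => by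
    have hz : ‖z.1.1‖ ^ 2 = ∑ i, z.1.1 i * z.1.1 i := by
      simp only [EuclideanSpace.real_norm_sq_eq, ← sq]
    simpa [smoothAlg.mk, smoothAlg.ofCLM, dotProduct, ← hz] using
      inv_mul_cancel₀ (pow_ne_zero 2 (norm_fst_ne_zero z))
  ρ_mul_self := smoothAlg.ext_of fun z => by
    simp [smoothAlg.mk, ← mul_inv, ← pow_mul, ← pow_add, mul_two, mul_comm 2]

lemma reflFrame_q_apply (i : Fin m) (z : offZero m) :
    ((reflFrame m).q i).1 z = reflv z.1.1 z.1.2 i := by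
  have h : ∑ l, z.1.1 l * z.1.2 l = ⟪z.1.1, z.1.2⟫ := by
    simp [PiLp.inner_apply, mul_comm]
  have h2 : (2 : smoothAlg (offZero m)).1 z = 2 := map_ofNat (smoothAlg.evalAt z) 2
  have hq : ((reflFrame m).q i).1 z = z.1.2 i
      - 2 * (‖z.1.1‖ ^ 2)⁻¹ * ⟪z.1.1, z.1.2⟫ * z.1.1 i := by
    simp [ReflFrame.q, reflFrame, smoothAlg.mk, smoothAlg.ofCLM, dotProduct, h, h2]
  rw [hq]
  simp only [reflv, PiLp.sub_apply, PiLp.smul_apply, smul_eq_mul]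
  ring

lemma reflFrame_q_dotProduct_q_apply (z : offZero m) :
    ((reflFrame m).q ⬝ᵥ (reflFrame m).q).1 z = ‖z.1.2‖ ^ 2 := by
  rw [ReflFrame.q_dotProduct_q, EuclideanSpace.real_norm_sq_eq]
  simp [reflFrame, smoothAlg.mk, smoothAlg.ofCLM, dotProduct, sq]

lemma pd1_eq {f : Evec m → Evec m → ℝ} {g : smoothAlg (offZero m)}
    (h : ∀ z : offZero m, f z.1.1 z.1.2 = g.1 z) (i : Fin m) (z : offZero m) :
    pd1 i f z.1.1 z.1.2 = ((reflFrame m).X i g).1 z := by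
  have hd := (smoothAlg.hasFDerivAt_of_eq isOpen_offZero (f := fun z => f z.1 z.2) h z).comp
    z.1.1 (hasFDerivAt_prodMk_left (𝕜 := ℝ) z.1.1 z.1.2)
  exact congrArg (· (EuclideanSpace.single i 1)) hd.fderiv

lemma pd2_eq {f : Evec m → Evec m → ℝ} {g : smoothAlg (offZero m)}
    (h : ∀ z : offZero m, f z.1.1 z.1.2 = g.1 z) (i : Fin m) (z : offZero m) :
    pd2 i f z.1.1 z.1.2 = ((reflFrame m).V i g).1 z := by
  have hd := (smoothAlg.hasFDerivAt_of_eq isOpen_offZero (f := fun z => f z.1 z.2) h z).comp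
    z.1.2 (hasFDerivAt_prodMk_right (𝕜 := ℝ) z.1.1 z.1.2)
  exact congrArg (· (EuclideanSpace.single i 1)) hd.fderiv

lemma Dk_eq (k : ℕ) {f : Evec m → Evec m → ℝ} {g : smoothAlg (offZero m)}
    (hfg : ∀ z : offZero m, f z.1.1 z.1.2 = g.1 z) (z : offZero m) :
    Dk m k f z.1.1 z.1.2 = ((reflFrame m).lap g).1 z
      - 4 / ((m : ℝ) + 2 * k - 2) *
        ((reflFrame m).v ⬝ᵥ grad (reflFrame m).X ((reflFrame m).mixed g)).1 z
      + 4 * ‖z.1.2‖ ^ 2 / (((m : ℝ) + 2 * k - 2) * ((m : ℝ) + 2 * k - 4)) *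
        ((reflFrame m).mixed ((reflFrame m).mixed g)).1 z := by
  have hlap : ∑ i, pd1 i (pd1 i f) z.1.1 z.1.2 = ((reflFrame m).lap g).1 z := by
    rw [← smoothAlg.evalAt_apply, ReflFrame.lap, divg, map_sum]
    exact Finset.sum_congr rfl fun i _ => pd1_eq (pd1_eq hfg i) i z
  have hmixed (i : Fin m) : ∑ j, pd1 i (pd2 j (pd1 j f)) z.1.1 z.1.2
      = (grad (reflFrame m).X ((reflFrame m).mixed g) i).1 z := by
    rw [← smoothAlg.evalAt_apply, grad, ReflFrame.mixed, divg, map_sum, map_sum]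
    exact Finset.sum_congr rfl fun j _ => pd1_eq (pd2_eq (pd1_eq hfg j) j) i z
  have hmixed2 (i : Fin m) : ∑ j, pd2 i (pd1 i (pd2 j (pd1 j f))) z.1.1 z.1.2
      = ((reflFrame m).V i (grad (reflFrame m).X ((reflFrame m).mixed g) i)).1 z := by
    rw [← smoothAlg.evalAt_apply, grad, ReflFrame.mixed, divg, map_sum, map_sum, map_sum]
    exact Finset.sum_congr rfl fun j _ => pd2_eq (pd1_eq (pd2_eq (pd1_eq hfg j) j) i) i z
  simp only [Dk, hlap, ← Finset.mul_sum, hmixed, hmixed2]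
  congr 2
  · rw [← smoothAlg.evalAt_apply _ (_ ⬝ᵥ _), dotProduct, map_sum]
    simp only [map_mul]
    rfl
  · exact (map_sum (smoothAlg.evalAt z) (fun i => (reflFrame m).V i
      (grad (reflFrame m).X ((reflFrame m).mixed g) i)) Finset.univ).symm

lemma reflection_kernel_eq (b : Fin m → ℝ) (P : MvPolynomial (Fin m) ℝ) (z : offZero m) :
    (∑ j, b j * z.1.1 j) / ‖z.1.1‖ ^ m * MvPolynomial.eval (fun i => reflv z.1.1 z.1.2 i) P
      = ((reflFrame m).scalarKernel b * (reflFrame m).iterDeriv 0 P).1 z := by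
  have hP : ((reflFrame m).iterDeriv 0 P).1 z
      = MvPolynomial.eval (fun i => reflv z.1.1 z.1.2 i) P := by
    rw [ReflFrame.iterDeriv_zero, ← smoothAlg.evalAt_apply, MvPolynomial.comp_aeval_apply]
    simp only [smoothAlg.evalAt_apply, reflFrame_q_apply, MvPolynomial.aeval_eq_eval]
  have hb : ((reflFrame m).scalarKernel b).1 z = (∑ j, b j * z.1.1 j) / ‖z.1.1‖ ^ m := by
    rw [div_eq_inv_mul, ReflFrame.scalarKernel, ← smoothAlg.evalAt_apply, map_mul, dotProduct,
      map_sum]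
    simp only [map_mul, Function.comp_apply, AlgHom.commutes]
    rfl
  rw [← hP, ← hb]
  rfl

theorem Dk_reflection_kernel {k : ℕ} (hm : 3 ≤ m) (hk : 1 ≤ k) (b : Fin m → ℝ)
    {P : MvPolynomial (Fin m) ℝ} (hE : Euler k P) (hP : IsHarmonicPoly P) {w : Evec m}
    (hw : w ≠ 0) (v : Evec m) :
    Dk m k (fun w v => (∑ j, b j * w j) / ‖w‖ ^ m *
      MvPolynomial.eval (fun i => reflv w v i) P) w v = 0 := by
  have hm' : (3 : ℝ) ≤ m := by exact_mod_cast hm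
  have hk' : (1 : ℝ) ≤ k := by exact_mod_cast hk
  have hN : (m : ℝ) + 2 * k - 2 ≠ 0 := by linarith
  have hN2 : (m : ℝ) + 2 * k - 4 ≠ 0 := by linarith
  have key := congrArg (smoothAlg.evalAt ⟨(w, v), hw⟩) ((reflFrame m).bosonic_kernel b hE hP)
  have hq := reflFrame_q_dotProduct_q_apply ⟨(w, v), hw⟩
  simp only [map_add, map_sub, map_mul, map_ofNat, map_natCast, map_zero,
    Fintype.card_fin, Int.cast_natCast, smoothAlg.evalAt_apply, hq] at key
  rw [Dk_eq k (reflection_kernel_eq b P) ⟨(w, v), hw⟩]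
  field_simp
  linear_combination key

end SmoothReflFrame

section Interpolation

lemma exists_finite_interpolation {K V α : Type*} [Field K] [AddCommGroup V] [Module K V]
    [FiniteDimensional K V] (ev : α → Module.Dual K V) (hev : ∀ q, (∀ a, ev a q = 0) → q = 0) :
    ∃ (n : ℕ) (pt : Fin n → α) (φ : Fin n → V), ∀ q, q = ∑ i, ev (pt i) q • φ i := by
  obtain ⟨e, he, hspan, -⟩ := Submodule.exists_fun_fin_finrank_span_eq K (Set.range ev)
  choose pt hpt using he
  have hker : LinearMap.ker (LinearMap.pi e) = ⊥ := by
    refine LinearMap.ker_eq_bot'.2 fun q hq => hev q fun a => ?_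
    have hle : Submodule.span K (Set.range e) ≤ LinearMap.ker (Module.Dual.eval K V q) :=
      Submodule.span_le.2 (Set.range_subset_iff.2 fun i => congrFun hq i)
    have hmem : ev a ∈ Submodule.span K (Set.range e) := by
      rw [hspan]
      exact Submodule.subset_span ⟨a, rfl⟩
    exact hle hmem
  obtain ⟨L, hL⟩ := (LinearMap.pi e).exists_leftInverse_of_injective hker
  refine ⟨_, pt, fun i => L fun j => if i = j then 1 else 0, fun q => ?_⟩
  calc q = L (LinearMap.pi e q) := (LinearMap.congr_fun hL q).symm
    _ = ∑ i, ev (pt i) q • L fun j => if i = j then 1 else 0 := by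
      rw [LinearMap.pi_apply_eq_sum_univ L]
      simp only [LinearMap.pi_apply, hpt]

end Interpolation

section PolynomialFunctions

open MvPolynomial

variable {m k : ℕ}

/-- The polynomial function on `ℝ^m` given by `P`. -/
def polyFun (P : MvPolynomial (Fin m) ℝ) (x : Evec m) : ℝ := eval (fun i => x i) P

lemma polyFun_injective : Function.Injective (polyFun : MvPolynomial (Fin m) ℝ → Evec m → ℝ) :=
  fun _ _ h => MvPolynomial.funext fun x => congrFun h (WithLp.toLp 2 x)

lemma hasFDerivAt_polyFun (P : MvPolynomial (Fin m) ℝ) (x : Evec m) :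
    HasFDerivAt (polyFun P)
      (∑ i, polyFun (pderiv i P) x • (EuclideanSpace.proj i : Evec m →L[ℝ] ℝ)) x := by
  induction P using MvPolynomial.induction_on with
  | C a =>
    have h : polyFun (C a : MvPolynomial (Fin m) ℝ) = fun _ => a := by ext; simp [polyFun]
    simpa [h, polyFun] using hasFDerivAt_const (𝕜 := ℝ) a x
  | add p q hp hq =>
    have h : polyFun (p + q) = polyFun p + polyFun q := by ext; simp [polyFun]
    rw [h]
    refine (hp.add hq).congr_fderiv ?_
    simp [polyFun, add_smul, Finset.sum_add_distrib]
  | mul_X p j hp =>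
    have h : polyFun (p * X j) = fun x : Evec m => polyFun p x * x j := by ext; simp [polyFun]
    rw [h]
    refine (hp.mul (EuclideanSpace.proj j : Evec m →L[ℝ] ℝ).hasFDerivAt).congr_fderiv ?_
    ext v
    simp [polyFun, Derivation.leibniz, pderiv_X, Pi.single_apply, Finset.sum_add_distrib,
      Finset.mul_sum, add_mul, mul_assoc, apply_ite]

lemma differentiable_polyFun (P : MvPolynomial (Fin m) ℝ) : Differentiable ℝ (polyFun P) :=
  fun x => (hasFDerivAt_polyFun P x).differentiableAt

lemma pdv_polyFun (P : MvPolynomial (Fin m) ℝ) (i : Fin m) :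
    pdv i (polyFun P) = polyFun (pderiv i P) := by
  funext x
  simp [pdv, (hasFDerivAt_polyFun P x).fderiv]

lemma contDiff_polyFun (P : MvPolynomial (Fin m) ℝ) : ContDiff ℝ ∞ (polyFun P) := by
  have h : polyFun P = fun x : Evec m => ∑ e ∈ P.support, P.coeff e * ∏ i, x i ^ e i :=
    funext fun x => eval_eq' _ P
  rw [h]
  fun_prop

lemma polyFun_smul {P : MvPolynomial (Fin m) ℝ} (hP : P.IsHomogeneous k) (c : ℝ) (x : Evec m) :
    polyFun P (c • x) = c ^ k * polyFun P x := by
  simp only [polyFun, eval_eq', Finset.mul_sum]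
  refine Finset.sum_congr rfl fun e he => ?_
  have hek : ∑ i, e i = k := by
    rw [← Finsupp.degree_eq_sum]
    by_contra hne
    exact mem_support_iff.1 he (hP.coeff_eq_zero hne)
  simp only [PiLp.smul_apply, smul_eq_mul, mul_pow, Finset.prod_mul_distrib,
    Finset.prod_pow_eq_pow_sum, hek]
  ring

lemma polyFun_homogeneousComponent {P : MvPolynomial (Fin m) ℝ}
    (hP : ∀ (c : ℝ) (x : Evec m), polyFun P (c • x) = c ^ k * polyFun P x) :
    polyFun (homogeneousComponent k P) = polyFun P := by
  funext x
  have hsum (y : Evec m) : polyFun P y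
      = ∑ n ∈ Finset.range (P.totalDegree + 1), polyFun (homogeneousComponent n P) y := by
    simp only [polyFun, ← map_sum, sum_homogeneousComponent]
  have hpoly : Polynomial.C (polyFun P x) * Polynomial.X ^ k
      = ∑ n ∈ Finset.range (P.totalDegree + 1),
        Polynomial.C (polyFun (homogeneousComponent n P) x) * Polynomial.X ^ n := by
    refine Polynomial.funext fun c => ?_
    simp only [Polynomial.eval_finsetSum, Polynomial.eval_mul, Polynomial.eval_C,
      Polynomial.eval_pow, Polynomial.eval_X, mul_comm _ (c ^ _), ← hP, hsum (c • x),
      polyFun_smul (homogeneousComponent_isHomogeneous _ P)]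
  have hcoeff := congrArg (Polynomial.coeff · k) hpoly
  simp only [Polynomial.coeff_C_mul_X_pow, Polynomial.finsetSum_coeff, if_true,
    Finset.sum_ite_eq, Finset.mem_range] at hcoeff
  rw [hcoeff]
  split_ifs with hk
  · rfl
  · rw [homogeneousComponent_eq_zero k P (by omega)]
    simp [polyFun]

/-- The polynomials that define the functions in `ℋ_k`. -/
def harmonicSubmodule (m k : ℕ) : Submodule ℝ (MvPolynomial (Fin m) ℝ) :=
  homogeneousSubmodule (Fin m) ℝ k ⊓
    LinearMap.ker (∑ i, (pderiv i).toLinearMap ∘ₗ (pderiv i).toLinearMap)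

lemma mem_harmonicSubmodule {P : MvPolynomial (Fin m) ℝ} :
    P ∈ harmonicSubmodule m k ↔ P.IsHomogeneous k ∧ IsHarmonicPoly P := by
  simp [harmonicSubmodule, IsHarmonicPoly, mem_homogeneousSubmodule]

lemma IsHk.exists_mem_harmonicSubmodule {p : Evec m → ℝ} (hp : IsHk m k p) :
    ∃ P ∈ harmonicSubmodule m k, p = polyFun P := by
  obtain ⟨⟨P, hP⟩, hhom, hlap⟩ := hp
  obtain rfl : p = polyFun P := funext hP
  have hcomp := polyFun_homogeneousComponent hhom
  refine ⟨homogeneousComponent k P, mem_harmonicSubmodule.2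
    ⟨homogeneousComponent_isHomogeneous k P, polyFun_injective (funext fun x => ?_)⟩, hcomp.symm⟩
  simpa [lapl, ← hcomp, pdv_polyFun, polyFun] using hlap x

lemma exists_homogeneous_polyFun_comp {P : MvPolynomial (Fin m) ℝ} (hP : P.IsHomogeneous k)
    (L : Evec m →ₗ[ℝ] Evec m) :
    ∃ Q : MvPolynomial (Fin m) ℝ, Q.IsHomogeneous k ∧ ∀ x, polyFun Q x = polyFun P (L x) := by
  let ℓ : Fin m → MvPolynomial (Fin m) ℝ := fun i =>
    ∑ j, C (L (EuclideanSpace.single j 1) i) * X j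
  have hℓ (i : Fin m) : (ℓ i).IsHomogeneous 1 :=
    IsHomogeneous.sum _ _ _ fun j _ => (isHomogeneous_X ℝ j).C_mul _
  refine ⟨aeval ℓ P, by simpa using hP.aeval ℓ hℓ, fun x => ?_⟩
  have hx : L x = ∑ j, x j • L (EuclideanSpace.single j 1) := by
    conv_lhs => rw [← (EuclideanSpace.basisFun (Fin m) ℝ).sum_repr x]
    simp
  simp only [polyFun, ← coe_aeval_eq_eval, RingHom.coe_coe, comp_aeval_apply]
  congr 2
  funext i
  simp [ℓ, hx, mul_comm]

lemma eq_zero_of_polyFun_closedBall {P : MvPolynomial (Fin m) ℝ} (hP : P.IsHomogeneous k)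
    (h : ∀ x ∈ closedBall (0 : Evec m) 1, polyFun P x = 0) : P = 0 := by
  refine polyFun_injective (funext fun x => ?_)
  have hc : (0 : ℝ) < 1 + ‖x‖ := by positivity
  have hx := h ((1 + ‖x‖)⁻¹ • x) (by
    rw [mem_closedBall_zero_iff, norm_smul, norm_inv, Real.norm_of_nonneg hc.le,
      inv_mul_le_iff₀ hc]
    linarith)
  rw [polyFun_smul hP] at hx
  simpa [polyFun] using (mul_eq_zero.1 hx).resolve_left (pow_ne_zero _ (inv_ne_zero hc.ne'))

lemma exists_polyFun_interpolation {W : Submodule ℝ (MvPolynomial (Fin m) ℝ)}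
    (hW : W ≤ homogeneousSubmodule (Fin m) ℝ k) :
    ∃ (n : ℕ) (pt : Fin n → Evec m) (φ : Fin n → MvPolynomial (Fin m) ℝ),
      (∀ i, ‖pt i‖ ≤ 1) ∧ (∀ i, φ i ∈ W) ∧
      ∀ P ∈ W, ∀ x, polyFun P x = ∑ i, polyFun P (pt i) * polyFun (φ i) x := by
  have : FiniteDimensional ℝ (homogeneousSubmodule (Fin m) ℝ k) :=
    Module.Finite.iff_fg.2 (homogeneousSubmodule_fg (σ := Fin m) (R := ℝ) k)
  have : FiniteDimensional ℝ W := Submodule.finiteDimensional_of_le hW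
  let ev (x : Evec m) : Module.Dual ℝ W := (aeval (R := ℝ) fun i => x i).toLinearMap ∘ₗ W.subtype
  obtain ⟨n, pt, φ, hφ⟩ := exists_finite_interpolation
    (fun x : closedBall (0 : Evec m) 1 => ev x) fun P hP =>
      Subtype.ext (eq_zero_of_polyFun_closedBall (hW P.2) fun x hx => hP ⟨x, hx⟩)
  refine ⟨n, fun i => pt i, fun i => φ i, fun i => mem_closedBall_zero_iff.1 (pt i).2,
    fun i => (φ i).2, fun P hP x => ?_⟩
  have hx := congrArg (ev x) (hφ ⟨P, hP⟩)
  simp only [map_sum, map_smul, smul_eq_mul] at hx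
  exact hx

end PolynomialFunctions

section Reduction

variable {m d k : ℕ}

instance : IsFiniteMeasure (sphereM m) := by
  unfold sphereM; infer_instance

lemma ae_sphereM_norm (m : ℕ) : ∀ᵐ u ∂(sphereM m), ‖u‖ = 1 := by
  rw [sphereM, ae_map_iff measurable_subtype_coe.aemeasurable
    (measurableSet_eq_fun measurable_norm measurable_const)]
  exact Eventually.of_forall fun u => by simp

lemma reflv_eq_reflection (w u : Evec m) : reflv w u = (ℝ ∙ w)ᗮ.reflection u := by
  rw [Submodule.reflection_orthogonal_apply, Submodule.reflection_singleton_apply, reflv]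
  simp only [RCLike.ofReal_real_eq_id, id]
  module

lemma norm_reflv (w u : Evec m) : ‖reflv w u‖ = ‖u‖ := by
  rw [reflv_eq_reflection, LinearIsometryEquiv.norm_map]

lemma reflv_smul_left {c : ℝ} (hc : c ≠ 0) (w u : Evec m) : reflv (c • w) u = reflv w u := by
  simp only [reflv_eq_reflection, Submodule.span_singleton_smul_eq hc.isUnit]

lemma contDiffOn_reflv (u : Evec m) : ContDiffOn ℝ ∞ (fun w => reflv w u) {w | w ≠ 0} := by
  unfold reflv
  refine contDiffOn_const.sub (ContDiffOn.smul (ContDiffOn.div ?_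
    ((contDiff_norm_sq ℝ).contDiffOn) fun w hw => pow_ne_zero 2 (norm_ne_zero_iff.2 hw))
    contDiffOn_id)
  exact contDiffOn_const.mul (contDiffOn_id.inner ℝ contDiffOn_const)

lemma IsZk.reflv_left {Z : Evec m → Evec m → ℝ} (hZ : IsZk m k Z) (w u v : Evec m) :
    Z (reflv w u) v = Z u (reflv w v) := by
  rw [reflv_eq_reflection, reflv_eq_reflection,
    ← hZ.2.2.2.2 ((ℝ ∙ w)ᗮ.reflection) u ((ℝ ∙ w)ᗮ.reflection v), Submodule.reflection_reflection]

lemma IsZk.integral_mul {Z : Evec m → Evec m → ℝ} (hZ : IsZk m k Z) {p h : Evec m → ℝ}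
    (hp : IsHk m k p) (hh : ∀ u ∈ closedBall (0 : Evec m) 1, h u = p u) (v : Evec m) :
    ∫ u, Z u v * h u ∂(sphereM m) = p v := by
  rw [← hZ.2.1 p hp v]
  refine integral_congr_ae ?_
  filter_upwards [ae_sphereM_norm m] with u hu
  rw [hh u (by simp [hu])]

lemma upP_downP_lastP (x : Evec (d + 1)) : upP d (downP d x) (lastP d x) = x := by
  ext i
  refine Fin.lastCases ?_ (fun j => ?_) i <;> simp [upP, downP, lastP]

lemma upP_sub_upP (x' t' : Evec d) (y s : ℝ) :
    upP d x' y - upP d t' s = upP d (x' - t') (y - s) := by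
  ext i
  refine Fin.lastCases ?_ (fun j => ?_) i <;> simp [upP]

lemma lastP_upP (x' : Evec d) (y : ℝ) : lastP d (upP d x' y) = y := by simp [upP, lastP]

lemma norm_upP (x' : Evec d) (y : ℝ) : ‖upP d x' y‖ = √(‖x'‖ ^ 2 + y ^ 2) := by
  rw [EuclideanSpace.norm_eq, EuclideanSpace.real_norm_sq_eq, Fin.sum_univ_castSucc]
  simp [upP]

lemma contDiff_lastP : ContDiff ℝ ∞ (lastP d) := by
  unfold lastP; fun_prop

lemma lastP_le_norm (x : Evec (d + 1)) : lastP d x ≤ ‖x‖ :=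
  (le_abs_self _).trans (by simpa [lastP] using PiLp.norm_apply_le x (Fin.last d))

lemma ne_zero_of_lastP_pos {w : Evec (d + 1)} (h : 0 < lastP d w) : w ≠ 0 :=
  norm_pos_iff.1 (h.trans_le (lastP_le_norm w))

lemma isOpen_lastP_pos : IsOpen {x : Evec (d + 1) | 0 < lastP d x} :=
  isOpen_lt continuous_const contDiff_lastP.continuous

/-- The inclusion `t' ↦ (t', 0)` of the boundary hyperplane. -/
def bdry (d : ℕ) : Evec d →L[ℝ] Evec (d + 1) :=
  LinearMap.toContinuousLinearMap
    { toFun := fun t => upP d t 0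
      map_add' := fun s t => by
        ext i
        refine Fin.lastCases ?_ (fun j => ?_) i <;> simp [upP]
      map_smul' := fun c t => by
        ext i
        refine Fin.lastCases ?_ (fun j => ?_) i <;> simp [upP] }

lemma bdry_apply (t : Evec d) : bdry d t = upP d t 0 := rfl

lemma lastP_sub_bdry (x : Evec (d + 1)) (t : Evec d) : lastP d (x - bdry d t) = lastP d x := by
  simp [lastP, bdry_apply, upP]

lemma norm_bdry (t : Evec d) : ‖bdry d t‖ = ‖t‖ := by
  simp [bdry_apply, norm_upP]

lemma sub_bdry_ne_zero {x : Evec (d + 1)} (hx : 0 < lastP d x) (t : Evec d) :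
    x - bdry d t ≠ 0 :=
  ne_zero_of_lastP_pos ((lastP_sub_bdry x t).symm ▸ hx)

/-- The kernel `w ↦ w_last |w|^{-(d+1)} P(R_w v)`: the integral of `P_H` against `P` over the
sphere, up to the constant `c_{m,k}`. -/
def reflKer (P : MvPolynomial (Fin (d + 1)) ℝ) (w v : Evec (d + 1)) : ℝ :=
  lastP d w / ‖w‖ ^ (d + 1) * polyFun P (reflv w v)

lemma IsZk.integral_PH_mul {Z : Evec (d + 1) → Evec (d + 1) → ℝ} (hZ : IsZk (d + 1) k Z)
    {P : MvPolynomial (Fin (d + 1)) ℝ} {h : Evec (d + 1) → ℝ} (hP : IsHk (d + 1) k (polyFun P))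
    (hh : ∀ u ∈ closedBall (0 : Evec (d + 1)) 1, h u = polyFun P u) (x v : Evec (d + 1))
    (t : Evec d) :
    ∫ u, PH d k Z (downP d x) (lastP d x) t u v * h u ∂(sphereM (d + 1))
      = cmk (d + 1) k * reflKer P (x - bdry d t) v := by
  simp only [PH, hZ.reflv_left, mul_assoc, upP_downP_lastP, ← bdry_apply]
  rw [integral_const_mul, integral_const_mul, hZ.integral_mul hP hh, reflKer, lastP_sub_bdry]

end Reduction

section BoundaryConvolution

variable {d : ℕ} {F : Type*} [NormedAddCommGroup F]

/-- The convolution `x ↦ ∫ g(t) K(x - (t, 0)) dt` with a boundary function. -/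
def boundaryConv (g : Evec d → ℝ) (K : Evec (d + 1) → ℝ) (x : Evec (d + 1)) : ℝ :=
  ∫ t, g t * K (x - bdry d t)

/-- Domination by the classical Poisson kernel on every half-space `{δ ≤ w_last}`. -/
def PoissonDecay (K : Evec (d + 1) → F) : Prop :=
  ∀ δ : ℝ, 0 < δ → ∃ C : ℝ, ∀ w, δ ≤ lastP d w → ‖K w‖ ≤ C * lastP d w / ‖w‖ ^ (d + 1)

/-- Boundary functions that can be convolved with every kernel of Poisson decay. -/
def PoissonIntegrable (g : Evec d → ℝ) : Prop :=
  Integrable fun t => g t * ((1 + ‖t‖) ^ (d + 1))⁻¹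

/-- Kernels whose convolution with a boundary function can be differentiated once under the
integral sign. -/
structure IsBoundaryKernel (K : Evec (d + 1) → ℝ) : Prop where
  smooth : ContDiffOn ℝ ∞ K {w | w ≠ 0}
  decay : PoissonDecay K
  decay_fderiv : PoissonDecay (fderiv ℝ K)

lemma exists_one_add_norm_le {δ : ℝ} (hδ : 0 < δ) {M : ℝ} (hM : 0 ≤ M) :
    ∃ c : ℝ, ∀ (x : Evec (d + 1)) (t : Evec d), ‖x‖ ≤ M → δ ≤ lastP d x →
      1 + ‖t‖ ≤ c * ‖x - bdry d t‖ := by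
  refine ⟨(1 + M) / δ + 1, fun x t hx hxδ => ?_⟩
  have hlow : δ ≤ ‖x - bdry d t‖ :=
    hxδ.trans ((lastP_sub_bdry x t).symm.trans_le (lastP_le_norm _))
  have ht : ‖t‖ ≤ M + ‖x - bdry d t‖ := by
    rw [← norm_bdry t]
    exact (norm_le_norm_add_norm_sub x _).trans (by gcongr)
  have hone : 1 + M ≤ (1 + M) / δ * ‖x - bdry d t‖ := by
    rw [div_mul_eq_mul_div, le_div_iff₀ hδ]
    gcongr
  linarith

lemma exists_inv_pow_le {δ : ℝ} (hδ : 0 < δ) {M : ℝ} (hM : 0 ≤ M) :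
    ∃ c : ℝ, ∀ (x : Evec (d + 1)) (t : Evec d), ‖x‖ ≤ M → δ ≤ lastP d x →
      (‖x - bdry d t‖ ^ (d + 1))⁻¹ ≤ c * ((1 + ‖t‖) ^ (d + 1))⁻¹ := by
  obtain ⟨c, h⟩ := exists_one_add_norm_le (d := d) hδ hM
  refine ⟨c ^ (d + 1), fun x t hx hxδ => ?_⟩
  have hpos : 0 < ‖x - bdry d t‖ := norm_pos_iff.2 (sub_bdry_ne_zero (hδ.trans_le hxδ) t)
  rw [← div_eq_mul_inv, inv_eq_one_div, div_le_div_iff₀ (by positivity) (by positivity), one_mul,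
    ← mul_pow]
  exact pow_le_pow_left₀ (by positivity) (h x t hx hxδ) _

lemma PoissonDecay.exists_norm_le {K : Evec (d + 1) → F} (hK : PoissonDecay K)
    {x : Evec (d + 1)} (hx : 0 < lastP d x) :
    ∃ C : ℝ, ∀ᶠ z in 𝓝 x, ∀ t, ‖K (z - bdry d t)‖ ≤ C * ((1 + ‖t‖) ^ (d + 1))⁻¹ := by
  obtain ⟨C, hC⟩ := hK _ (half_pos hx)
  obtain ⟨c, hpow⟩ := exists_inv_pow_le (d := d) (half_pos hx) (by positivity : 0 ≤ ‖x‖ + 1)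
  refine ⟨|C| * (‖x‖ + 1) * c, ?_⟩
  filter_upwards [contDiff_lastP.continuous.continuousAt.eventually_const_lt (half_lt_self hx),
    continuous_norm.continuousAt.eventually_lt_const (lt_add_one ‖x‖)] with z hzδ hz t
  have hzlast : lastP d z ≤ ‖x‖ + 1 := (lastP_le_norm z).trans hz.le
  have hz0 : 0 ≤ lastP d z := ((half_pos hx).trans hzδ).le
  calc ‖K (z - bdry d t)‖ ≤ C * lastP d z / ‖z - bdry d t‖ ^ (d + 1) := by
        simpa only [lastP_sub_bdry] using hC (z - bdry d t) ((lastP_sub_bdry z t).symm ▸ hzδ.le)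
    _ ≤ |C| * (‖x‖ + 1) * (‖z - bdry d t‖ ^ (d + 1))⁻¹ := by
        rw [div_eq_mul_inv]
        gcongr
        exact le_abs_self C
    _ ≤ |C| * (‖x‖ + 1) * (c * ((1 + ‖t‖) ^ (d + 1))⁻¹) := by
        gcongr
        exact hpow z t hz.le hzδ.le
    _ = _ := by ring

lemma isOpen_ne_zero : IsOpen {w : Evec (d + 1) | w ≠ 0} := isOpen_ne

lemma continuous_comp_sub_bdry {K : Evec (d + 1) → F} (hK : ContinuousOn K {w | w ≠ 0})
    {x : Evec (d + 1)} (hx : 0 < lastP d x) : Continuous fun t : Evec d => K (x - bdry d t) :=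
  hK.comp_continuous (by fun_prop) (sub_bdry_ne_zero hx)

variable {g : Evec d → ℝ} {K : Evec (d + 1) → ℝ} {x : Evec (d + 1)}

lemma PoissonIntegrable.aestronglyMeasurable (hg : PoissonIntegrable g) :
    AEStronglyMeasurable g := by
  have hρ : Continuous fun t : Evec d => (1 + ‖t‖) ^ (d + 1) := by fun_prop
  refine ((Integrable.aestronglyMeasurable hg).mul hρ.aestronglyMeasurable).congr
    (Eventually.of_forall fun t => ?_)
  exact inv_mul_cancel_right₀ (by positivity) (g t)

lemma PoissonIntegrable.const_mul (hg : PoissonIntegrable g) (c : ℝ) :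
    PoissonIntegrable fun t => c * g t := by
  simpa only [PoissonIntegrable, mul_assoc] using Integrable.const_mul hg c

lemma PoissonIntegrable.integrable_smul [NormedSpace ℝ F] (hg : PoissonIntegrable g)
    {K : Evec (d + 1) → F} (hc : ContinuousOn K {w | w ≠ 0}) (hK : PoissonDecay K)
    (hx : 0 < lastP d x) : Integrable fun t => g t • K (x - bdry d t) := by
  obtain ⟨C, hC⟩ := hK.exists_norm_le hx
  refine (hg.norm.const_mul C).mono'
    (hg.aestronglyMeasurable.smul (continuous_comp_sub_bdry hc hx).aestronglyMeasurable)
    (Eventually.of_forall fun t => ?_)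
  have hρ : 0 ≤ ((1 + ‖t‖) ^ (d + 1))⁻¹ := by positivity
  rw [norm_smul, norm_mul, Real.norm_of_nonneg hρ, mul_left_comm]
  gcongr
  exact hC.self_of_nhds t

lemma IsBoundaryKernel.integrable (hK : IsBoundaryKernel K) (hg : PoissonIntegrable g)
    (hx : 0 < lastP d x) : Integrable fun t => g t * K (x - bdry d t) :=
  hg.integrable_smul hK.smooth.continuousOn hK.decay hx

lemma IsBoundaryKernel.continuousOn_fderiv (hK : IsBoundaryKernel K) :
    ContinuousOn (fderiv ℝ K) {w | w ≠ 0} :=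
  hK.smooth.continuousOn_fderiv_of_isOpen isOpen_ne_zero (by simp)

lemma IsBoundaryKernel.integrable_fderiv (hK : IsBoundaryKernel K) (hg : PoissonIntegrable g)
    (hx : 0 < lastP d x) : Integrable fun t => g t • fderiv ℝ K (x - bdry d t) :=
  hg.integrable_smul hK.continuousOn_fderiv hK.decay_fderiv hx

lemma IsBoundaryKernel.hasFDerivAt_boundaryConv (hK : IsBoundaryKernel K)
    (hg : PoissonIntegrable g) (hx : 0 < lastP d x) :
    HasFDerivAt (boundaryConv g K) (∫ t, g t • fderiv ℝ K (x - bdry d t)) x := by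
  obtain ⟨C, hC⟩ := hK.decay_fderiv.exists_norm_le hx
  refine hasFDerivAt_integral_of_dominated_of_fderiv_le
    (F' := fun z t => g t • fderiv ℝ K (z - bdry d t))
    (bound := fun t => C * ‖g t * ((1 + ‖t‖) ^ (d + 1))⁻¹‖)
    (hC.and (isOpen_lastP_pos.mem_nhds hx)) ?_ (hK.integrable hg hx)
    (hK.integrable_fderiv hg hx).aestronglyMeasurable
    (Eventually.of_forall fun t z hz => ?_) (hg.norm.const_mul C)
    (Eventually.of_forall fun t z hz => ?_)
  · filter_upwards [isOpen_lastP_pos.mem_nhds hx] with z hz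
      using (hK.integrable hg hz).aestronglyMeasurable
  · have hρ : 0 ≤ ((1 + ‖t‖) ^ (d + 1))⁻¹ := by positivity
    rw [norm_smul, norm_mul, Real.norm_of_nonneg hρ, mul_left_comm]
    gcongr
    exact hz.1 t
  · have hd : DifferentiableAt ℝ K (z - bdry d t) :=
      (hK.smooth.contDiffAt (isOpen_ne_zero.mem_nhds (sub_bdry_ne_zero hz.2 t))).differentiableAt
        (by simp)
    exact (hd.hasFDerivAt.comp z ((hasFDerivAt_id z).sub_const _)).const_mul (g t)

lemma IsBoundaryKernel.pdv_boundaryConv (hK : IsBoundaryKernel K) (hg : PoissonIntegrable g)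
    (hx : 0 < lastP d x) (i : Fin (d + 1)) :
    pdv i (boundaryConv g K) x = boundaryConv g (pdv i K) x := by
  rw [pdv, (hK.hasFDerivAt_boundaryConv hg hx).fderiv,
    ContinuousLinearMap.integral_apply (hK.integrable_fderiv hg hx)]
  rfl

lemma IsBoundaryKernel.differentiableOn_boundaryConv (hK : IsBoundaryKernel K)
    (hg : PoissonIntegrable g) :
    DifferentiableOn ℝ (boundaryConv g K) {x | 0 < lastP d x} :=
  fun _ hx => (hK.hasFDerivAt_boundaryConv hg hx).differentiableAt.differentiableWithinAt

lemma IsBoundaryKernel.integrable_pdv (hK : IsBoundaryKernel K) (hg : PoissonIntegrable g)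
    (hx : 0 < lastP d x) (i : Fin (d + 1)) :
    Integrable fun t => g t * pdv i K (x - bdry d t) :=
  (hK.integrable_fderiv hg hx).apply_continuousLinearMap (EuclideanSpace.single i 1)

lemma IsBoundaryKernel.eqOn_pdv_boundaryConv (hK : IsBoundaryKernel K)
    (hg : PoissonIntegrable g) (b : Fin (d + 1)) :
    Set.EqOn (pdv b (boundaryConv g K)) (boundaryConv g (pdv b K)) {x | 0 < lastP d x} :=
  fun _ hx => hK.pdv_boundaryConv hg hx b

lemma IsBoundaryKernel.pdv_pdv_boundaryConv (hK : IsBoundaryKernel K)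
    {a b : Fin (d + 1)} (hK' : IsBoundaryKernel (pdv b K)) (hg : PoissonIntegrable g)
    (hx : 0 < lastP d x) :
    pdv a (pdv b (boundaryConv g K)) x = boundaryConv g (pdv a (pdv b K)) x := by
  rw [pdv, ((hK.eqOn_pdv_boundaryConv hg b).eventuallyEq_of_mem
    (isOpen_lastP_pos.mem_nhds hx)).fderiv_eq]
  exact hK'.pdv_boundaryConv hg hx a

lemma IsBoundaryKernel.differentiableOn_pdv_boundaryConv (hK : IsBoundaryKernel K)
    {b : Fin (d + 1)} (hK' : IsBoundaryKernel (pdv b K)) (hg : PoissonIntegrable g) :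
    DifferentiableOn ℝ (pdv b (boundaryConv g K)) {x | 0 < lastP d x} :=
  (hK'.differentiableOn_boundaryConv hg).congr (hK.eqOn_pdv_boundaryConv hg b)

lemma IsBoundaryKernel.differentiableOn (hK : IsBoundaryKernel K) :
    DifferentiableOn ℝ K {w | w ≠ 0} :=
  hK.smooth.differentiableOn (by simp)

lemma boundaryConv_sum_mul {ι : Type*} [Fintype ι] {K : ι → Evec (d + 1) → ℝ}
    (hK : ∀ i, Integrable fun t => g t * K i (x - bdry d t)) (c : ι → ℝ) :
    boundaryConv g (fun w => ∑ i, K i w * c i) x = ∑ i, boundaryConv g (K i) x * c i := by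
  simp only [boundaryConv, Finset.mul_sum, ← mul_assoc, ← integral_mul_const]
  exact integral_finsetSum _ fun i _ => (hK i).mul_const _

end BoundaryConvolution

section HomogeneousKernels

variable {E F : Type*} [NormedAddCommGroup E] [NormedSpace ℝ E] [NormedAddCommGroup F]
  [NormedSpace ℝ F]

/-- Positive homogeneity of degree `-n` off the origin. -/
def NegHomogeneous (n : ℕ) (h : E → F) : Prop :=
  ∀ c : ℝ, 0 < c → ∀ w, w ≠ 0 → h (c • w) = (c ^ n)⁻¹ • h w

lemma NegHomogeneous.exists_norm_le [ProperSpace E] {n : ℕ} {h : E → F}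
    (hh : NegHomogeneous n h) (hc : ContinuousOn h {w | w ≠ 0}) :
    ∃ C : ℝ, 0 ≤ C ∧ ∀ w, w ≠ 0 → ‖h w‖ ≤ C / ‖w‖ ^ n := by
  obtain ⟨C, hC⟩ := (isCompact_sphere (0 : E) 1).exists_bound_of_continuousOn
    (hc.mono fun w hw => ne_zero_of_mem_unit_sphere ⟨w, hw⟩)
  refine ⟨|C|, abs_nonneg C, fun w hw => ?_⟩
  have hn : 0 < ‖w‖ := norm_pos_iff.2 hw
  have hs : ‖w‖⁻¹ • w ∈ sphere (0 : E) 1 := by simp [norm_smul, hn.ne']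
  have hw' : h w = (‖w‖ ^ n)⁻¹ • h (‖w‖⁻¹ • w) := by
    rw [← hh ‖w‖ hn _ (ne_zero_of_mem_unit_sphere ⟨_, hs⟩), smul_inv_smul₀ hn.ne']
  rw [hw', norm_smul, norm_inv, norm_pow, norm_norm, div_eq_inv_mul]
  gcongr
  exact (hC _ hs).trans (le_abs_self C)

lemma NegHomogeneous.fderiv_negHomogeneous {n : ℕ} {h : E → F} (hh : NegHomogeneous n h) :
    NegHomogeneous (n + 1) (fderiv ℝ h) := by
  intro c hc w hw
  have hscale : c • fderiv ℝ h (c • w) = (c ^ n)⁻¹ • fderiv ℝ h w := by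
    have heq : (fun w => h (c • w)) =ᶠ[𝓝 w] (c ^ n)⁻¹ • h := by
      filter_upwards [isOpen_ne.mem_nhds hw] with z hz using hh c hc z hz
    rw [← fderiv_comp_smul, heq.fderiv_eq, fderiv_const_smul_field]
    rfl
  rw [pow_succ, mul_inv, mul_comm, mul_smul, ← hscale, inv_smul_smul₀ hc.ne']

variable {d n : ℕ}

lemma NegHomogeneous.pdv_negHomogeneous {h : Evec d → ℝ} (hh : NegHomogeneous n h) (i : Fin d) :
    NegHomogeneous (n + 1) (pdv i h) := fun c hc w hw =>
  congrArg (· (EuclideanSpace.single i 1)) (hh.fderiv_negHomogeneous c hc w hw)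

lemma NegHomogeneous.poissonDecay {h : Evec (d + 1) → F} (hh : NegHomogeneous n h)
    (hc : ContinuousOn h {w | w ≠ 0}) (hn : d + 1 ≤ n) : PoissonDecay h := by
  obtain ⟨C, hC, hbound⟩ := hh.exists_norm_le hc
  obtain ⟨j, rfl⟩ := Nat.exists_eq_add_of_le hn
  intro δ hδ
  refine ⟨C / δ ^ (j + 1), fun w hw => ?_⟩
  have hw0 : w ≠ 0 := ne_zero_of_lastP_pos (hδ.trans_le hw)
  have : 0 < ‖w‖ := norm_pos_iff.2 hw0
  have hδw : δ ≤ ‖w‖ := hw.trans (lastP_le_norm w)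
  have hlast : 0 ≤ lastP d w := hδ.le.trans hw
  calc ‖h w‖ ≤ C * δ / (δ * ‖w‖ ^ j * ‖w‖ ^ (d + 1)) := by
        refine (hbound w hw0).trans_eq ?_
        field_simp
        ring
    _ ≤ C * lastP d w / (δ * δ ^ j * ‖w‖ ^ (d + 1)) := by
        gcongr
    _ = C / δ ^ (j + 1) * lastP d w / ‖w‖ ^ (d + 1) := by
        rw [← pow_succ', div_mul_eq_div_div, div_mul_eq_mul_div]

lemma contDiffOn_pdv {h : Evec (d + 1) → ℝ} (hh : ContDiffOn ℝ ∞ h {w | w ≠ 0})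
    (i : Fin (d + 1)) : ContDiffOn ℝ ∞ (pdv i h) {w | w ≠ 0} :=
  (hh.fderiv_of_isOpen isOpen_ne_zero (m := ∞) (by simp)).clm_apply contDiffOn_const

lemma NegHomogeneous.isBoundaryKernel {h : Evec (d + 1) → ℝ} (hh : NegHomogeneous n h)
    (hs : ContDiffOn ℝ ∞ h {w | w ≠ 0}) (hn : d ≤ n) (hdecay : PoissonDecay h) :
    IsBoundaryKernel h where
  smooth := hs
  decay := hdecay
  decay_fderiv := hh.fderiv_negHomogeneous.poissonDecay
    (hs.continuousOn_fderiv_of_isOpen isOpen_ne_zero (by simp)) (by omega)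

variable (P : MvPolynomial (Fin (d + 1)) ℝ) (v : Evec (d + 1))

lemma contDiffOn_reflKer : ContDiffOn ℝ ∞ (reflKer P · v) {w | w ≠ 0} := by
  have hn : ContDiffOn ℝ ∞ (fun w : Evec (d + 1) => ‖w‖) {w | w ≠ 0} :=
    contDiffOn_id.norm ℝ fun w hw => hw
  exact (contDiff_lastP.contDiffOn.div (hn.pow (d + 1)) fun w hw =>
    pow_ne_zero _ (norm_ne_zero_iff.2 hw)).mul
      ((contDiff_polyFun P).comp_contDiffOn (contDiffOn_reflv v))

lemma negHomogeneous_reflKer : NegHomogeneous d (reflKer P · v) := by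
  intro c hc w hw
  have : ‖w‖ ≠ 0 := norm_ne_zero_iff.2 hw
  have hl : lastP d (c • w) = c * lastP d w := by simp [lastP]
  simp only [reflKer, reflv_smul_left hc.ne', hl, norm_smul, Real.norm_of_nonneg hc.le,
    smul_eq_mul, mul_pow]
  field_simp
  ring

lemma poissonDecay_reflKer : PoissonDecay (reflKer P · v) := by
  intro δ hδ
  obtain ⟨C, hC⟩ := (isCompact_closedBall (0 : Evec (d + 1)) ‖v‖).exists_bound_of_continuousOn
    (contDiff_polyFun P).continuous.continuousOn
  refine ⟨C, fun w hw => ?_⟩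
  have hw0 : 0 ≤ lastP d w := hδ.le.trans hw
  simp only [reflKer]
  rw [norm_mul, Real.norm_of_nonneg (by positivity), mul_div_assoc, mul_comm]
  gcongr
  exact hC _ (by simp [norm_reflv])

lemma isBoundaryKernel_reflKer : IsBoundaryKernel (reflKer P · v) :=
  (negHomogeneous_reflKer P v).isBoundaryKernel (contDiffOn_reflKer P v) le_rfl
    (poissonDecay_reflKer P v)

lemma isBoundaryKernel_pdv_reflKer (i : Fin (d + 1)) :
    IsBoundaryKernel (pdv i (reflKer P · v)) :=
  have hs := contDiffOn_pdv (contDiffOn_reflKer P v) i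
  have hh := (negHomogeneous_reflKer P v).pdv_negHomogeneous i
  hh.isBoundaryKernel hs d.le_succ (hh.poissonDecay hs.continuousOn le_rfl)

end HomogeneousKernels

section SeparatedSums

variable {m k : ℕ} {ι : Type*} [Fintype ι]

/-- On `U`, `f` is the finite sum of the products `A l x * ψ l v`, with `ψ l` polynomial. -/
def HasSep (U : Set (Evec m)) (f : Evec m → Evec m → ℝ) (A : ι → Evec m → ℝ)
    (ψ : ι → MvPolynomial (Fin m) ℝ) : Prop :=
  ∀ x ∈ U, ∀ v, f x v = ∑ l, A l x * polyFun (ψ l) v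

/-- The coefficient with which `∂_{x_a} ∂_{x_b}` enters the bosonic Laplacian of a function
whose dependence on the second variable is `ψ`. -/
def bosonicCoeff (k : ℕ) (v : Evec m) (a b : Fin m) (ψ : MvPolynomial (Fin m) ℝ) : ℝ :=
  (if a = b then polyFun ψ v else 0)
    - 4 / ((m : ℝ) + 2 * k - 2) * (v a * polyFun (MvPolynomial.pderiv b ψ) v)
    + 4 * ‖v‖ ^ 2 / (((m : ℝ) + 2 * k - 2) * ((m : ℝ) + 2 * k - 4)) *
      polyFun (MvPolynomial.pderiv a (MvPolynomial.pderiv b ψ)) v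

variable {U : Set (Evec m)} {f : Evec m → Evec m → ℝ} {A : ι → Evec m → ℝ}
  {ψ : ι → MvPolynomial (Fin m) ℝ}

lemma HasSep.hasSep_pd1 (hf : HasSep U f A ψ) (hU : IsOpen U)
    (hA : ∀ l, DifferentiableOn ℝ (A l) U) (i : Fin m) :
    HasSep U (pd1 i f) (fun l => pdv i (A l)) ψ := by
  intro x hx v
  have hd : ∀ l, DifferentiableAt ℝ (A l) x := fun l => (hA l).differentiableAt (hU.mem_nhds hx)
  have h : (fun x₁ => f x₁ v) =ᶠ[𝓝 x] fun x₁ => ∑ l, A l x₁ * polyFun (ψ l) v := by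
    filter_upwards [hU.mem_nhds hx] with z hz using hf z hz v
  rw [pd1, h.fderiv_eq, fderiv_fun_sum fun l _ => (hd l).mul_const _, sum_apply]
  refine Finset.sum_congr rfl fun l _ => ?_
  rw [fderiv_mul_const (hd l)]
  exact mul_comm _ _

lemma HasSep.hasSep_pd2 (hf : HasSep U f A ψ) (j : Fin m) :
    HasSep U (pd2 j f) A (fun l => MvPolynomial.pderiv j (ψ l)) := by
  intro x hx v
  have h : (fun v₁ => f x v₁) = fun v₁ => ∑ l, A l x * polyFun (ψ l) v₁ := funext (hf x hx)
  rw [pd2, h, fderiv_fun_sum fun l _ => (differentiable_polyFun (ψ l) v).const_mul _, sum_apply]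
  refine Finset.sum_congr rfl fun l _ => ?_
  rw [fderiv_const_mul (differentiable_polyFun (ψ l) v), ← pdv_polyFun]
  rfl

lemma HasSep.Dk_eq (hf : HasSep U f A ψ) (hU : IsOpen U)
    (hA : ∀ l, DifferentiableOn ℝ (A l) U) (hA' : ∀ l b, DifferentiableOn ℝ (pdv b (A l)) U)
    {x : Evec m} (hx : x ∈ U) (v : Evec m) :
    Dk m k f x v = ∑ l, ∑ a, ∑ b, pdv a (pdv b (A l)) x * bosonicCoeff k v a b (ψ l) := by
  have h1 := hf.hasSep_pd1 hU hA
  have h11 := fun i j => (h1 j).hasSep_pd1 hU (fun l => hA' l j) i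
  have h121 := fun i j => ((h1 j).hasSep_pd2 j).hasSep_pd1 hU (fun l => hA' l j) i
  have hlapl : ∑ i, pd1 i (pd1 i f) x v
      = ∑ l, ∑ a, ∑ b, pdv a (pdv b (A l)) x * (if a = b then polyFun (ψ l) v else 0) := by
    simp only [fun i => h11 i i x hx v, mul_ite, mul_zero, Finset.sum_ite_eq, Finset.mem_univ,
      if_true]
    exact Finset.sum_comm
  have hmixed : ∑ i, ∑ j, v i * pd1 i (pd2 j (pd1 j f)) x v
      = ∑ l, ∑ a, ∑ b, pdv a (pdv b (A l)) x *
        (v a * polyFun (MvPolynomial.pderiv b (ψ l)) v) := by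
    simp only [fun i j => h121 i j x hx v, Finset.mul_sum, mul_left_comm]
    exact Finset.sum_comm_cycle
  have hdiv : ∑ i, ∑ j, pd2 i (pd1 i (pd2 j (pd1 j f))) x v
      = ∑ l, ∑ a, ∑ b, pdv a (pdv b (A l)) x *
        polyFun (MvPolynomial.pderiv a (MvPolynomial.pderiv b (ψ l))) v := by
    simp only [fun i j => (h121 i j).hasSep_pd2 i x hx v]
    exact Finset.sum_comm_cycle
  rw [Dk, hlapl, hmixed, hdiv]
  simp only [Finset.mul_sum, ← Finset.sum_sub_distrib, ← Finset.sum_add_distrib, bosonicCoeff]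
  refine Finset.sum_congr rfl fun l _ => Finset.sum_congr rfl fun a _ =>
    Finset.sum_congr rfl fun b _ => ?_
  ring

lemma HasSep.Dk_eq_sum {κ : Type*} [Fintype κ] {F : κ → Evec m → Evec m → ℝ}
    {A : κ → ι → Evec m → ℝ} (hF : ∀ i, HasSep U (F i) (A i) ψ) (hU : IsOpen U)
    (hA : ∀ i l, DifferentiableOn ℝ (A i l) U)
    (hA' : ∀ i l b, DifferentiableOn ℝ (pdv b (A i l)) U)
    (hf : ∀ x ∈ U, ∀ v, f x v = ∑ i, F i x v) {x : Evec m} (hx : x ∈ U) (v : Evec m) :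
    Dk m k f x v = ∑ i, Dk m k (F i) x v := by
  have hsep : HasSep U f (fun q : κ × ι => A q.1 q.2) (fun q => ψ q.2) := fun z hz u => by
    simp only [hf z hz u, fun i => hF i z hz u, Fintype.sum_prod_type]
  rw [hsep.Dk_eq hU (fun q => hA q.1 q.2) (fun q => hA' q.1 q.2) hx, Fintype.sum_prod_type]
  exact Finset.sum_congr rfl fun i _ => ((hF i).Dk_eq hU (hA i) (hA' i) hx v).symm

end SeparatedSums

section SeparatedKernels

variable {d k : ℕ} {ι : Type*} [Fintype ι] {g : Evec d → ℝ}
  {K : Evec (d + 1) → Evec (d + 1) → ℝ} {κ : ι → Evec (d + 1) → ℝ}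
  {ψ : ι → MvPolynomial (Fin (d + 1)) ℝ}

lemma HasSep.hasSep_boundaryConv (hK : HasSep {w | w ≠ 0} K κ ψ)
    (hκ : ∀ l, IsBoundaryKernel (κ l)) (hg : PoissonIntegrable g) :
    HasSep {x | 0 < lastP d x} (fun x v => boundaryConv g (K · v) x)
      (fun l => boundaryConv g (κ l)) ψ := by
  intro x hx v
  rw [← boundaryConv_sum_mul (fun l => (hκ l).integrable hg hx)]
  exact integral_congr_ae (Eventually.of_forall fun t =>
    congrArg (g t * ·) (hK _ (sub_bdry_ne_zero hx t) v))

lemma HasSep.Dk_boundaryConv (hK : HasSep {w | w ≠ 0} K κ ψ)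
    (hκ : ∀ l, IsBoundaryKernel (κ l)) (hκ' : ∀ l b, IsBoundaryKernel (pdv b (κ l)))
    (hg : PoissonIntegrable g) {x : Evec (d + 1)} (hx : 0 < lastP d x) (v : Evec (d + 1)) :
    Dk (d + 1) k (fun x v => boundaryConv g (K · v) x) x v
      = boundaryConv g (fun w => Dk (d + 1) k K w v) x := by
  have hDk : ∀ w ≠ 0, Dk (d + 1) k K w v = ∑ q : (ι × Fin (d + 1)) × Fin (d + 1),
      pdv q.1.2 (pdv q.2 (κ q.1.1)) w * bosonicCoeff k v q.1.2 q.2 (ψ q.1.1) := fun w hw => by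
    rw [hK.Dk_eq isOpen_ne_zero (fun l => (hκ l).differentiableOn)
      (fun l b => (hκ' l b).differentiableOn) hw]
    simp only [Fintype.sum_prod_type]
  have hcongr : boundaryConv g (fun w => Dk (d + 1) k K w v) x = boundaryConv g
      (fun w => ∑ q : (ι × Fin (d + 1)) × Fin (d + 1),
        pdv q.1.2 (pdv q.2 (κ q.1.1)) w * bosonicCoeff k v q.1.2 q.2 (ψ q.1.1)) x :=
    integral_congr_ae (Eventually.of_forall fun t =>
      congrArg (g t * ·) (hDk _ (sub_bdry_ne_zero hx t)))
  have hint := fun q : (ι × Fin (d + 1)) × Fin (d + 1) =>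
    (hκ' q.1.1 q.2).integrable_pdv hg hx q.1.2
  rw [hcongr, boundaryConv_sum_mul hint,
    (hK.hasSep_boundaryConv hκ hg).Dk_eq isOpen_lastP_pos
      (fun l => (hκ l).differentiableOn_boundaryConv hg)
      (fun l b => (hκ l).differentiableOn_pdv_boundaryConv (hκ' l b) hg) hx]
  simp only [Fintype.sum_prod_type, fun l a b =>
    (hκ l).pdv_pdv_boundaryConv (a := a) (hκ' l b) hg hx]

lemma exists_hasSep_reflKer (d k : ℕ) :
    ∃ (n : ℕ) (pt : Fin n → Evec (d + 1)) (ψ : Fin n → MvPolynomial (Fin (d + 1)) ℝ),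
      ∀ P : MvPolynomial (Fin (d + 1)) ℝ, P.IsHomogeneous k →
        HasSep {w | w ≠ 0} (reflKer P) (fun l w => reflKer P w (pt l)) ψ := by
  obtain ⟨n, pt, ψ, -, -, hint⟩ := exists_polyFun_interpolation
    (le_refl (MvPolynomial.homogeneousSubmodule (Fin (d + 1)) ℝ k))
  refine ⟨n, pt, ψ, fun P hP w _ v => ?_⟩
  obtain ⟨Q, hQ, hQP⟩ := exists_homogeneous_polyFun_comp hP
    ((ℝ ∙ w)ᗮ.reflection.toLinearEquiv : Evec (d + 1) →ₗ[ℝ] Evec (d + 1))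
  have hQ_refl : ∀ u, polyFun P (reflv w u) = polyFun Q u := fun u => by
    rw [hQP, reflv_eq_reflection]; rfl
  simp only [reflKer, hQ_refl, hint Q hQ v, Finset.mul_sum, mul_assoc]

lemma Dk_reflKer_eq_zero (hd : 2 ≤ d) (hk : 1 ≤ k) {P : MvPolynomial (Fin (d + 1)) ℝ}
    (hP : P ∈ harmonicSubmodule (d + 1) k) {w : Evec (d + 1)} (hw : w ≠ 0) (v : Evec (d + 1)) :
    Dk (d + 1) k (reflKer P) w v = 0 := by
  obtain ⟨hom, hharm⟩ := mem_harmonicSubmodule.1 hP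
  have hE : Euler k P := by simpa [Euler] using hom.sum_X_mul_pderiv
  have hlast : ∀ x : Evec (d + 1),
      ∑ j, (Pi.single (Fin.last d) 1 : Fin (d + 1) → ℝ) j * x j = lastP d x := fun x => by
    simp [Pi.single_apply, lastP]
  have h := Dk_reflection_kernel (by omega) hk (Pi.single (Fin.last d) 1) hE hharm hw v
  simp only [hlast] at h
  exact h

lemma Dk_boundaryConv_reflKer_eq_zero (hd : 2 ≤ d) (hk : 1 ≤ k)
    {P : MvPolynomial (Fin (d + 1)) ℝ} (hP : P ∈ harmonicSubmodule (d + 1) k)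
    (hg : PoissonIntegrable g) {x : Evec (d + 1)} (hx : 0 < lastP d x) (v : Evec (d + 1)) :
    Dk (d + 1) k (fun x v => boundaryConv g (reflKer P · v) x) x v = 0 := by
  obtain ⟨n, pt, ψ, hsep⟩ := exists_hasSep_reflKer d k
  rw [(hsep P (mem_harmonicSubmodule.1 hP).1).Dk_boundaryConv
    (fun l => isBoundaryKernel_reflKer P (pt l))
    (fun l b => isBoundaryKernel_pdv_reflKer P (pt l) b) hg hx]
  simp only [boundaryConv, fun t => Dk_reflKer_eq_zero hd hk hP (sub_bdry_ne_zero hx t) v,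
    mul_zero, integral_zero]

lemma IsZk.exists_PHint_eq_sum {Z : Evec (d + 1) → Evec (d + 1) → ℝ} (hZ : IsZk (d + 1) k Z)
    {f : Evec d → Evec (d + 1) → ℝ}
    (hf : ∀ t, ∃ q, IsHk (d + 1) k q ∧ ∀ u ∈ closedBall (0 : Evec (d + 1)) 1, f t u = q u)
    (hfi : ∀ u, ‖u‖ ≤ 1 → PoissonIntegrable (f · u)) :
    ∃ (n : ℕ) (g : Fin n → Evec d → ℝ) (φ : Fin n → MvPolynomial (Fin (d + 1)) ℝ),
      (∀ i, PoissonIntegrable (g i)) ∧ (∀ i, φ i ∈ harmonicSubmodule (d + 1) k) ∧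
      ∀ x, 0 < lastP d x → ∀ v, PHint d k Z f (downP d x) (lastP d x) v
        = ∑ i, boundaryConv (g i) (reflKer (φ i) · v) x := by
  obtain ⟨n, pt, φ, hpt, hφ, hint⟩ := exists_polyFun_interpolation
    (inf_le_left : harmonicSubmodule (d + 1) k ≤ _)
  have hg : ∀ i, PoissonIntegrable fun t => cmk (d + 1) k * f t (pt i) := fun i =>
    (hfi _ (hpt i)).const_mul _
  refine ⟨n, _, φ, hg, hφ, fun x hx v => ?_⟩
  have hinner : ∀ t, ∫ u, PH d k Z (downP d x) (lastP d x) t u v * f t u ∂(sphereM (d + 1))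
      = ∑ i, cmk (d + 1) k * f t (pt i) * reflKer (φ i) (x - bdry d t) v := fun t => by
    obtain ⟨q, hq, hfq⟩ := hf t
    obtain ⟨P, hP, rfl⟩ := hq.exists_mem_harmonicSubmodule
    rw [hZ.integral_PH_mul hq hfq, reflKer, hint P hP]
    simp only [Finset.mul_sum, reflKer, fun i => hfq (pt i) (by simpa using hpt i)]
    exact Finset.sum_congr rfl fun i _ => by ring
  simp only [PHint, hinner, boundaryConv]
  exact integral_finsetSum _ fun i _ => (isBoundaryKernel_reflKer (φ i) v).integrable (hg i) hx

theorem Dk_PHint_eq_zero (hd : 2 ≤ d) (hk : 1 ≤ k) {Z : Evec (d + 1) → Evec (d + 1) → ℝ}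
    (hZ : IsZk (d + 1) k Z) {f : Evec d → Evec (d + 1) → ℝ}
    (hf : ∀ t, ∃ q, IsHk (d + 1) k q ∧ ∀ u ∈ closedBall (0 : Evec (d + 1)) 1, f t u = q u)
    (hfi : ∀ u, ‖u‖ ≤ 1 → PoissonIntegrable (f · u)) {x : Evec (d + 1)} (hx : 0 < lastP d x)
    (v : Evec (d + 1)) :
    Dk (d + 1) k (fun x v => PHint d k Z f (downP d x) (lastP d x) v) x v = 0 := by
  obtain ⟨n, g, φ, hg, hφ, hPH⟩ := hZ.exists_PHint_eq_sum hf hfi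
  obtain ⟨N, pt, ψ, hsep⟩ := exists_hasSep_reflKer d k
  have hK := fun i l => isBoundaryKernel_reflKer (φ i) (pt l)
  have hK' := fun i l => isBoundaryKernel_pdv_reflKer (φ i) (pt l)
  have hsepF := fun i => (hsep (φ i) (mem_harmonicSubmodule.1 (hφ i)).1).hasSep_boundaryConv
    (hK i) (hg i)
  rw [HasSep.Dk_eq_sum hsepF isOpen_lastP_pos
    (fun i l => (hK i l).differentiableOn_boundaryConv (hg i))
    (fun i l b => (hK i l).differentiableOn_pdv_boundaryConv (hK' i l b) (hg i)) hPH hx]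
  exact Finset.sum_eq_zero fun i _ => Dk_boundaryConv_reflKer_eq_zero hd hk (hφ i) (hg i) hx v

end SeparatedKernels

section LConvolution

lemma lintegral_rpow_le {α : Type*} [MeasurableSpace α] {μ : Measure α} {p : ℝ} (hp : 1 ≤ p)
    {g : α → ENNReal} (hg : AEMeasurable g μ) :
    (∫⁻ a, g a ∂μ) ^ p ≤ μ Set.univ ^ (p - 1) * ∫⁻ a, g a ^ p ∂μ := by
  have hp0 : 0 < p := by linarith
  have h := eLpNorm'_le_eLpNorm'_mul_rpow_measure_univ one_pos hp hg.aestronglyMeasurable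
  simp only [eLpNorm', enorm_eq_self, ENNReal.rpow_one, div_one] at h
  refine (ENNReal.rpow_le_rpow h hp0.le).trans_eq ?_
  rw [ENNReal.mul_rpow_of_nonneg _ _ hp0.le, ← ENNReal.rpow_mul, ← ENNReal.rpow_mul, mul_comm,
    one_div_mul_cancel hp0.ne', ENNReal.rpow_one, sub_mul, one_mul, one_div_mul_cancel hp0.ne']

lemma rpow_sub_one_mul_self {p : ℝ} (hp : 1 ≤ p) (a : ENNReal) : a ^ (p - 1) * a = a ^ p := by
  conv_rhs => rw [← sub_add_cancel p 1, ENNReal.rpow_add_of_nonneg _ _ (sub_nonneg.2 hp)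
    zero_le_one, ENNReal.rpow_one]

variable {G : Type*} [AddGroup G] [MeasurableSpace G] [MeasurableAdd₂ G] [MeasurableNeg G]
  {μ : Measure G} {P F : G → ENNReal} {p : ℝ}

lemma lintegral_lconvolution [SFinite μ] [μ.IsAddLeftInvariant] (hP : Measurable P)
    (hF : Measurable F) : ∫⁻ x, (P ⋆ₗ[μ] F) x ∂μ = (∫⁻ x, P x ∂μ) * ∫⁻ x, F x ∂μ := by
  simp only [lconvolution_def]
  rw [lintegral_lintegral_swap (by fun_prop), ← lintegral_mul_const _ hP]
  refine lintegral_congr fun y => ?_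
  rw [lintegral_const_mul _ (by fun_prop), lintegral_add_left_eq_self]

lemma lconvolution_rpow_le (hp : 1 ≤ p) (hP : Measurable P) (hF : Measurable F) (x : G) :
    (P ⋆ₗ[μ] F) x ^ p ≤ (∫⁻ y, P y ∂μ) ^ (p - 1) * (P ⋆ₗ[μ] fun y => F y ^ p) x := by
  have hFx : Measurable fun y => F (-y + x) := by fun_prop
  have h := lintegral_rpow_le (μ := μ.withDensity P) hp hFx.aemeasurable
  rwa [withDensity_apply _ MeasurableSet.univ, setLIntegral_univ,
    lintegral_withDensity_eq_lintegral_mul _ hP hFx,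
    lintegral_withDensity_eq_lintegral_mul _ hP (hFx.pow_const p)] at h

theorem lintegral_lconvolution_rpow_le [SFinite μ] [μ.IsAddLeftInvariant] (hp : 1 ≤ p)
    (hP : Measurable P) (hF : Measurable F) :
    ∫⁻ x, (P ⋆ₗ[μ] F) x ^ p ∂μ ≤ (∫⁻ x, P x ∂μ) ^ p * ∫⁻ x, F x ^ p ∂μ := by
  refine (lintegral_mono fun x => lconvolution_rpow_le hp hP hF x).trans_eq ?_
  rw [lintegral_const_mul _ (measurable_lconvolution μ hP (hF.pow_const p)),
    lintegral_lconvolution hP (hF.pow_const p), ← mul_assoc, rpow_sub_one_mul_self hp]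

end LConvolution

section HalfSpacePoisson

variable {d : ℕ}

/-- The classical Poisson kernel of the half-space, up to a constant factor. -/
def halfPoisson (d : ℕ) (y : ℝ) (t : Evec d) : ENNReal :=
  ENNReal.ofReal (y / ‖upP d t y‖ ^ (d + 1))

lemma measurable_halfPoisson (y : ℝ) : Measurable (halfPoisson d y) := by
  unfold halfPoisson
  simp only [norm_upP]
  fun_prop

lemma integrable_inv_one_add_norm_pow :
    Integrable fun t : Evec d => ((1 + ‖t‖) ^ (d + 1))⁻¹ := by
  have h := integrable_one_add_norm (E := Evec d) (μ := volume) (r := (d + 1 : ℕ)) (by simp)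
  refine h.congr (Eventually.of_forall fun t => ?_)
  simp only
  rw [Real.rpow_neg (by positivity), Real.rpow_natCast]

lemma lintegral_halfPoisson_one_lt_top : ∫⁻ t, halfPoisson d 1 t < ⊤ := by
  obtain ⟨c, h⟩ := exists_inv_pow_le (d := d) one_pos (norm_nonneg (upP d 0 1))
  refine lt_of_le_of_lt (lintegral_mono fun t => ENNReal.ofReal_le_ofReal ?_)
    (integrable_inv_one_add_norm_pow.const_mul c).lintegral_lt_top
  have ht := h (upP d 0 1) (-t) le_rfl (lastP_upP _ _).ge
  rwa [bdry_apply, upP_sub_upP, sub_zero, zero_sub, neg_neg, norm_neg, ← one_div] at ht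

lemma halfPoisson_one_inv_smul {y : ℝ} (hy : 0 < y) (t : Evec d) :
    halfPoisson d 1 (y⁻¹ • t) = ENNReal.ofReal (y ^ d) * halfPoisson d y t := by
  have hsmul : upP d (y⁻¹ • t) 1 = y⁻¹ • upP d t y := by
    ext i
    refine Fin.lastCases ?_ (fun j => ?_) i <;> simp [upP, hy.ne']
  have hpos : 0 < ‖upP d t y‖ := by
    rw [norm_upP]; positivity
  rw [halfPoisson, halfPoisson, ← ENNReal.ofReal_mul (by positivity), hsmul, norm_smul,
    Real.norm_of_nonneg (by positivity), mul_pow, inv_pow]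
  congr 1
  field_simp
  ring

lemma lintegral_halfPoisson {y : ℝ} (hy : 0 < y) :
    ∫⁻ t, halfPoisson d y t = ∫⁻ t, halfPoisson d 1 t := by
  have hscale : ∫⁻ t, halfPoisson d 1 (y⁻¹ • t)
      = ENNReal.ofReal (y ^ d) * ∫⁻ t, halfPoisson d 1 t := by
    rw [← lintegral_map (measurable_halfPoisson 1) (measurable_const_smul y⁻¹),
      Measure.map_addHaar_smul _ (inv_ne_zero hy.ne'), lintegral_smul_measure]
    simp [abs_of_pos hy]
  simp only [halfPoisson_one_inv_smul hy] at hscale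
  rw [lintegral_const_mul _ (measurable_halfPoisson y)] at hscale
  exact (ENNReal.mul_right_inj (by simpa using pow_pos hy d) ENNReal.ofReal_ne_top).1 hscale

end HalfSpacePoisson

section LpBounds

variable {m d k : ℕ} {p : ℝ}

lemma integrable_mul_of_lintegral_rpow_lt_top {α : Type*} [MeasurableSpace α] {μ : Measure α}
    (hp : 1 ≤ p) {g ρ : α → ℝ} (hg : AEStronglyMeasurable g μ) (hgp : ∫⁻ a, ‖g a‖ₑ ^ p ∂μ < ⊤)
    (hρ : Integrable ρ μ) (hρ1 : ∀ a, ‖ρ a‖ₑ ≤ 1) : Integrable (fun a => g a * ρ a) μ := by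
  refine ⟨hg.mul hρ.aestronglyMeasurable, ?_⟩
  have hbound : ∀ a, ‖g a * ρ a‖ₑ ≤ ‖ρ a‖ₑ + ‖g a‖ₑ ^ p := fun a => by
    rw [enorm_mul]
    rcases le_total ‖g a‖ₑ 1 with h | h
    · exact (mul_le_of_le_one_left' h).trans le_self_add
    · exact (mul_le_of_le_one_right' (hρ1 a)).trans
        ((ENNReal.le_rpow_self_of_one_le h hp).trans le_add_self)
  refine (lintegral_mono hbound).trans_lt ?_
  rw [lintegral_add_left' hρ.aestronglyMeasurable.enorm]
  exact ENNReal.add_lt_top.2 ⟨hρ.2, hgp⟩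

lemma enorm_rpow_eq_ofReal (hp : 0 ≤ p) (a : ℝ) : ‖a‖ₑ ^ p = ENNReal.ofReal (|a| ^ p) := by
  rw [Real.enorm_eq_ofReal_abs, ENNReal.ofReal_rpow_of_nonneg (abs_nonneg a) hp]

lemma lpH_eq_lintegral_enorm (hp : 0 ≤ p) (f : Evec d → Evec (d + 1) → ℝ) :
    lpH d p f = (∫⁻ t, ∫⁻ u, ‖f t u‖ₑ ^ p ∂(sphereM (d + 1))) ^ (1 / p) := by
  simp only [lpH, enorm_rpow_eq_ofReal hp]

lemma IsZk.enorm_le {Z : Evec m → Evec m → ℝ} (hZ : IsZk m k Z) {u v : Evec m}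
    (hu : ‖u‖ ≤ 1) (hv : ‖v‖ ≤ 1) : ‖Z u v‖ₑ ≤ hdim m k := by
  rw [Real.enorm_eq_ofReal_abs, ← ENNReal.ofReal_natCast]
  exact ENNReal.ofReal_le_ofReal (hZ.2.2.2.1 u v hu hv)

lemma IsZk.enorm_apply_le_lintegral {Z : Evec m → Evec m → ℝ} (hZ : IsZk m k Z)
    {q h : Evec m → ℝ} (hq : IsHk m k q) (hh : ∀ u ∈ closedBall (0 : Evec m) 1, h u = q u)
    {v : Evec m} (hv : ‖v‖ ≤ 1) : ‖h v‖ₑ ≤ hdim m k * ∫⁻ u, ‖h u‖ₑ ∂(sphereM m) := by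
  rw [hh v (by simpa using hv), ← hZ.integral_mul hq hh v,
    ← lintegral_const_mul' _ _ (ENNReal.natCast_ne_top _)]
  refine (enorm_integral_le_lintegral_enorm _).trans (lintegral_mono_ae ?_)
  filter_upwards [ae_sphereM_norm m] with u hu
  rw [enorm_mul]
  gcongr
  exact hZ.enorm_le hu.le hv

variable {f : Evec d → Evec (d + 1) → ℝ} {Z : Evec (d + 1) → Evec (d + 1) → ℝ}

lemma MemLpH.measurable_apply (hf : MemLpH d k p f) (u : Evec (d + 1)) : Measurable (f · u) :=
  hf.1.comp (measurable_id.prodMk measurable_const)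

lemma MemLpH.measurable_lintegral_enorm (hf : MemLpH d k p f) :
    Measurable fun t => ∫⁻ u, ‖f t u‖ₑ ∂(sphereM (d + 1)) :=
  Measurable.lintegral_prod_right' hf.1.enorm

lemma MemLpH.lintegral_lt_top (hp : 0 < p) (hf : MemLpH d k p f) :
    ∫⁻ t, ∫⁻ u, ‖f t u‖ₑ ^ p ∂(sphereM (d + 1)) < ⊤ := by
  have h := hf.2.2
  rwa [lpH_eq_lintegral_enorm hp.le, ENNReal.rpow_lt_top_iff_of_pos (by positivity)] at h

lemma MemLpH.lintegral_enorm_rpow_le (hp : 1 ≤ p) (hf : MemLpH d k p f) :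
    ∫⁻ t, (∫⁻ u, ‖f t u‖ₑ ∂(sphereM (d + 1))) ^ p ≤
      sphereM (d + 1) Set.univ ^ (p - 1) * ∫⁻ t, ∫⁻ u, ‖f t u‖ₑ ^ p ∂(sphereM (d + 1)) := by
  have hσ : sphereM (d + 1) Set.univ ^ (p - 1) ≠ ⊤ :=
    ENNReal.rpow_ne_top_of_nonneg (sub_nonneg.2 hp) (measure_ne_top _ _)
  rw [← lintegral_const_mul' _ _ hσ]
  exact lintegral_mono fun t => lintegral_rpow_le hp
    (hf.1.comp (measurable_const.prodMk measurable_id)).enorm.aemeasurable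

lemma MemLpH.poissonIntegrable (hp : 1 ≤ p) (hf : MemLpH d k p f) (hZ : IsZk (d + 1) k Z)
    {v : Evec (d + 1)} (hv : ‖v‖ ≤ 1) : PoissonIntegrable (f · v) := by
  have hp0 : 0 < p := by linarith
  refine integrable_mul_of_lintegral_rpow_lt_top hp
    (hf.measurable_apply v).aestronglyMeasurable ?_ integrable_inv_one_add_norm_pow fun t => ?_
  · have hle : ∀ t, ‖f t v‖ₑ ^ p ≤
        (hdim (d + 1) k : ENNReal) ^ p * (∫⁻ u, ‖f t u‖ₑ ∂(sphereM (d + 1))) ^ p := fun t => by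
      obtain ⟨q, hq, hfq⟩ := hf.2.1 t
      rw [← ENNReal.mul_rpow_of_nonneg _ _ hp0.le]
      exact ENNReal.rpow_le_rpow (hZ.enorm_apply_le_lintegral hq hfq hv) hp0.le
    refine (lintegral_mono hle).trans_lt ?_
    rw [lintegral_const_mul _ (hf.measurable_lintegral_enorm.pow_const p)]
    have hH := (hf.lintegral_lt_top hp0).ne
    exact ENNReal.mul_lt_top (by finiteness)
      ((hf.lintegral_enorm_rpow_le hp).trans_lt (by finiteness))
  · rw [Real.enorm_eq_ofReal (by positivity), ENNReal.ofReal_le_one]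
    exact inv_le_one_of_one_le₀ (one_le_pow₀ (le_add_of_nonneg_right (norm_nonneg t)))

lemma IsZk.enorm_PHint_le (hZ : IsZk (d + 1) k Z) (f : Evec d → Evec (d + 1) → ℝ) (x' : Evec d)
    {y : ℝ} (hy : 0 < y) {v : Evec (d + 1)} (hv : ‖v‖ ≤ 1) :
    ‖PHint d k Z f x' y v‖ₑ ≤ ‖cmk (d + 1) k‖ₑ * hdim (d + 1) k *
      (halfPoisson d y ⋆ₗ fun t => ∫⁻ u, ‖f t u‖ₑ ∂(sphereM (d + 1))) x' := by
  have hC : ‖cmk (d + 1) k‖ₑ * hdim (d + 1) k ≠ ⊤ := by finiteness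
  rw [PHint, lconvolution_comm, lconvolution_def, ← lintegral_const_mul' _ _ hC]
  refine (enorm_integral_le_lintegral_enorm _).trans (lintegral_mono fun t => ?_)
  rw [mul_comm (∫⁻ u, ‖f t u‖ₑ ∂_), neg_add_eq_sub,
    ← lintegral_const_mul' (halfPoisson d y (x' - t)) _ ENNReal.ofReal_ne_top,
    ← lintegral_const_mul' _ _ hC]
  refine (enorm_integral_le_lintegral_enorm _).trans (lintegral_mono_ae ?_)
  filter_upwards [ae_sphereM_norm (d + 1)] with u hu
  rw [PH, upP_sub_upP, sub_zero, enorm_mul, enorm_mul, enorm_mul, halfPoisson,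
    Real.enorm_eq_ofReal (r := y / _) (by positivity)]
  calc _ ≤ ‖cmk (d + 1) k‖ₑ * ENNReal.ofReal (y / ‖upP d (x' - t) y‖ ^ (d + 1)) *
        hdim (d + 1) k * ‖f t u‖ₑ := by
        gcongr
        exact hZ.enorm_le (by rw [norm_reflv, hu]) hv
    _ = _ := by ring

lemma IsZk.lintegral_enorm_PHint_rpow_le (hp : 0 ≤ p) (hZ : IsZk (d + 1) k Z)
    (f : Evec d → Evec (d + 1) → ℝ) (x' : Evec d) {y : ℝ} (hy : 0 < y) :
    ∫⁻ v, ‖PHint d k Z f x' y v‖ₑ ^ p ∂(sphereM (d + 1)) ≤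
      (‖cmk (d + 1) k‖ₑ * hdim (d + 1) k) ^ p * sphereM (d + 1) Set.univ *
        (halfPoisson d y ⋆ₗ fun t => ∫⁻ u, ‖f t u‖ₑ ∂(sphereM (d + 1))) x' ^ p := by
  rw [mul_right_comm, ← ENNReal.mul_rpow_of_nonneg _ _ hp, ← lintegral_const]
  refine lintegral_mono_ae ?_
  filter_upwards [ae_sphereM_norm (d + 1)] with v hv
  exact ENNReal.rpow_le_rpow (hZ.enorm_PHint_le f x' hy hv.le) hp

theorem lpH_PHint_le (hp : 1 ≤ p) (hf : MemLpH d k p f) (hZ : IsZk (d + 1) k Z)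
    {y : ℝ} (hy : 0 < y) :
    lpH d p (fun x' v => PHint d k Z f x' y v) ≤
      ‖cmk (d + 1) k‖ₑ * hdim (d + 1) k *
        ((∫⁻ t, halfPoisson d 1 t) * sphereM (d + 1) Set.univ) * lpH d p f := by
  have hp0 : 0 < p := by linarith
  set C : ENNReal := ‖cmk (d + 1) k‖ₑ * hdim (d + 1) k
  set M : ENNReal := ∫⁻ t, halfPoisson d 1 t
  set σ : ENNReal := sphereM (d + 1) Set.univ
  set H : ENNReal := ∫⁻ t, ∫⁻ u, ‖f t u‖ₑ ^ p ∂(sphereM (d + 1))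
  have hyoung : ∫⁻ x', ∫⁻ v, ‖PHint d k Z f x' y v‖ₑ ^ p ∂(sphereM (d + 1)) ≤
      (C * (M * σ)) ^ p * H := by
    calc ∫⁻ x', ∫⁻ v, ‖PHint d k Z f x' y v‖ₑ ^ p ∂(sphereM (d + 1))
        ≤ C ^ p * σ * (M ^ p * (σ ^ (p - 1) * H)) := by
          refine (lintegral_mono fun x' =>
            hZ.lintegral_enorm_PHint_rpow_le hp0.le f x' hy).trans ?_
          rw [lintegral_const_mul' _ _ (by finiteness)]
          gcongr
          refine (lintegral_lconvolution_rpow_le hp (measurable_halfPoisson y)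
            hf.measurable_lintegral_enorm).trans ?_
          rw [lintegral_halfPoisson hy]
          gcongr
          exact hf.lintegral_enorm_rpow_le hp
      _ = C ^ p * (M ^ p * (σ ^ (p - 1) * σ)) * H := by ring
      _ = (C * (M * σ)) ^ p * H := by
          rw [rpow_sub_one_mul_self hp, ENNReal.mul_rpow_of_nonneg C _ hp0.le,
            ENNReal.mul_rpow_of_nonneg M _ hp0.le]
  rw [lpH_eq_lintegral_enorm hp0.le, lpH_eq_lintegral_enorm hp0.le]
  refine (ENNReal.rpow_le_rpow hyoung (by positivity)).trans_eq ?_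
  rw [ENNReal.mul_rpow_of_nonneg _ _ (by positivity), ← ENNReal.rpow_mul,
    mul_one_div_cancel hp0.ne', ENNReal.rpow_one]

end LpBounds

/-- Dirichlet problem in the upper half-space with `L^p` data,
parts (1) and (2). Here `m = d+1 ≥ 3` and the constant depends only on `m` and `k`. -/
theorem stmt_4 (d k : ℕ) (hm : 3 ≤ d + 1) (hk : 1 ≤ k)
    (Z : Evec (d + 1) → Evec (d + 1) → ℝ) (hZ : IsZk (d + 1) k Z) :
    ∃ c : ℝ, 0 < c ∧
      ∀ p : ℝ, 1 ≤ p →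
        ∀ f : Evec d → Evec (d + 1) → ℝ, MemLpH d k p f →
          (∀ x : Evec (d + 1), 0 < lastP d x → ∀ v : Evec (d + 1), ‖v‖ < 1 →
            Dk (d + 1) k (fun x₁ v₁ => PHint d k Z f (downP d x₁) (lastP d x₁) v₁) x v = 0) ∧
          (∀ y : ℝ, 0 < y →
            lpH d p (fun x' v => PHint d k Z f x' y v) ≤ ENNReal.ofReal c * lpH d p f) := by
  set B : ENNReal := ‖cmk (d + 1) k‖ₑ * hdim (d + 1) k *
    ((∫⁻ t, halfPoisson d 1 t) * sphereM (d + 1) Set.univ)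
  have hB : B ≠ ⊤ := by
    have hmass := (lintegral_halfPoisson_one_lt_top (d := d)).ne
    finiteness
  refine ⟨B.toReal + 1, by positivity, fun p hp f hf => ⟨fun x hx v _ => ?_, fun y hy => ?_⟩⟩
  · exact Dk_PHint_eq_zero (by omega) hk hZ hf.2.1
      (fun _ hu => hf.poissonIntegrable hp hZ hu) hx v
  · refine (lpH_PHint_le hp hf hZ hy).trans ?_
    gcongr
    rw [ENNReal.le_ofReal_iff_toReal_le hB (by positivity)]
    linarith
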